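/- arXiv:2510.18661 — 2 statements merged into one kernel-verified Lean document; each statement's English description precedes it below -/
import Mathlib

section
/- Weighted regularization: let S_n^comb be a combinatorial clique n-simplicial complex over a locally finite graph (V,E). If there exists a family of weights (m_i)_{0≤i≤n}, strictly positive exactly on simplices and permutation-invariant, such that the weighted complex S_n = (V,(m_i)) is globally χ-complete, then the Gauss–Bonnet operator D = d + δ and the Hodge Laplacian L = D² are essentially self-adjoint on ⊕_{i=0}^n C_c^i(V) with respect to the Hilbert structure H = ⊕_{i=0}^n ℓ²(m_i) determined by these weights. -/
/-!
Essential self-adjointness is phrased as density of finitely supported cochains in the graph norm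
of the maximal operators, so the task is to approximate.  Throughout, `delta` agrees, up to the
nonzero real factor `greenConst` (normalisation and the sign caused by appending rather than
prepending a vertex), with the adjoint of `d`.

*Cut-offs.*  The given functions `χ_k` are clamped to `[0, 1]` and a simplex receives the minimum
of the values at its vertices (`cut`).  What the energy bound controls depends on the parity of the
degree `j`, because the alternating sum defining `d` of an average degenerates.  For odd `j` a
plateau forces `Σ_y m_{j+1}(x, y) ≤ C m_j(x)`, so `d` and `delta` between degrees `j` and `j + 1`
are bounded; for even `j` the bound controls the squared differences of `χ_k` along the added
vertex.  Both cases give the uniform bound on the oscillation `osc` of `χ_k` over simplices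
recorded in `IsCutoff` (`exists_isCutoff`).

*The operator `D`.*  The commutators of `d` and `delta` with multiplication by the cut-offs are
dominated by the oscillation and vanish eventually at every simplex, so they tend to `0` strongly
on `ℓ²` (`IsCutoff.null_d_comm`, `IsCutoff.null_delta_comm`).  Hence `χ_k u → u` in the graph norm
of `D` for each `u` in the maximal domain (`IsCutoff.esa_D`).

*The Laplacian.*  In degree `i` the operator is `L = delta d + d delta`.  One of the two terms is
bounded by parity, so both terms lie in `ℓ²` on the maximal domain, and Caccioppoli-type
estimates (`IsCutoff.memL2_d`, `IsCutoff.memL2_delta`) put `d u` and `delta u` in `ℓ²`.  Green's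
formula on these domains (`IsCutoff.green`) makes the maximal Laplacian symmetric.  A pair `(a, b)`
orthogonal to the graph of `L` over finitely supported cochains satisfies `L b = -a`, hence is
orthogonal to the maximal graph, and a Hilbert space projection argument (`exists_graph_approx`)
gives the approximating sequence (`IsCutoff.esa_L`).
-/

open Filter Function Set
open scoped Topology

namespace DiscreteHodge

/-- A weighted graph `G = (V, m₀, m₁)`: a strictly positive vertex weight `m₀`, a symmetric
nonnegative edge weight `m₁`; `x, y` are neighbors iff `m₁ x y > 0`; `G` is locally finite. -/
structure WG (V : Type*) where
  m₀ : V → ℝ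
  m₁ : V → V → ℝ
  m₀_pos : ∀ x, 0 < m₀ x
  m₁_nonneg : ∀ x y, 0 ≤ m₁ x y
  m₁_symm : ∀ x y, m₁ x y = m₁ y x
  locFin : ∀ x, {y | 0 < m₁ x y}.Finite

variable {V : Type*}

/-- Adjacency in a weighted graph. -/
def WG.Adj (G : WG V) (x y : V) : Prop := 0 < G.m₁ x y

/-- A tuple of vertices is a simplex of the clique complex iff its vertices are pairwise
distinct and pairwise adjacent (span a complete subgraph). -/
def IsSimplex (G : WG V) {k : ℕ} (x : Fin k → V) : Prop :=
  Function.Injective x ∧ ∀ a b : Fin k, a ≠ b → G.Adj (x a) (x b)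

/-- The family of simplex weights `(m_i)` of the weighted oriented clique `n`-simplicial
complex over `G`: `m i` is defined on `(i+1)`-tuples, extends `m₀, m₁`, is strictly positive
exactly on simplices (for `1 ≤ i ≤ n`) and is invariant under permutations of its arguments. -/
structure CliqueWeights (G : WG V) (n : ℕ) where
  m : ∀ i : ℕ, (Fin (i + 1) → V) → ℝ
  nonneg : ∀ i x, 0 ≤ m i x
  m_zero : ∀ x : Fin 1 → V, m 0 x = G.m₀ (x 0)
  m_one : ∀ x : Fin 2 → V, m 1 x = G.m₁ (x 0) (x 1)
  pos_iff : ∀ i, 1 ≤ i → i ≤ n → ∀ x : Fin (i + 1) → V, (0 < m i x ↔ IsSimplex G x)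
  perm_inv : ∀ i, 1 ≤ i → i ≤ n → ∀ (x : Fin (i + 1) → V) (σ : Equiv.Perm (Fin (i + 1))),
      m i (x ∘ σ) = m i x

/-- An alternating function on tuples. -/
def IsAlternating {k : ℕ} (f : (Fin k → V) → ℂ) : Prop :=
  ∀ (x : Fin k → V) (σ : Equiv.Perm (Fin k)),
    f (x ∘ σ) = ((Equiv.Perm.sign σ : ℤ) : ℂ) * f x

/-- An `i`-cochain: an alternating function on `(i+1)`-tuples supported on oriented
`i`-simplices.  Elements of `C_c^i(V)` are cochains with finite support. -/
def IsCochain (G : WG V) (i : ℕ) (f : (Fin (i + 1) → V) → ℂ) : Prop :=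
  IsAlternating f ∧ ∀ x, ¬ IsSimplex G x → f x = 0

/-- Coboundary operator on the part of the complex lying over `Λ ⊆ V`:
`d_i f(x₁,…,x_{i+1}) = Σ_j (−1)^{j+1} f(x₁,…,x̂_j,…,x_{i+1})` on simplices with all
vertices in `Λ`, and `0` elsewhere. -/
noncomputable def dOn (G : WG V) (Λ : Set V) (i : ℕ) (f : (Fin (i + 1) → V) → ℂ) :
    (Fin (i + 2) → V) → ℂ :=
  Set.indicator {x | IsSimplex G x ∧ ∀ j, x j ∈ Λ}
    (fun x => ∑ j : Fin (i + 2), (-1 : ℂ) ^ (j : ℕ) * f (x ∘ j.succAbove))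

/-- The coboundary operator `d_{i+1} : C_c^i(V) → C_c^{i+1}(V)` (paper index `i+1`). -/
noncomputable def d (G : WG V) (i : ℕ) (f : (Fin (i + 1) → V) → ℂ) :
    (Fin (i + 2) → V) → ℂ :=
  dOn G Set.univ i f

/-- Codifferential on the part of the complex lying over `Λ ⊆ V`:
`δ g(x₁,…,x_{i+1}) = (1/m_i(x)) Σ_{y ∈ F(x) ∩ Λ} m_{i+1}(x,y) g(x,y)`; vertices outside the
common-neighbor set `F(x)` contribute `0` since `m_{i+1}` vanishes on non-simplices. -/
noncomputable def deltaOn (G : WG V) {n : ℕ} (W : CliqueWeights G n) (Λ : Set V) (i : ℕ)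
    (g : (Fin (i + 2) → V) → ℂ) : (Fin (i + 1) → V) → ℂ :=
  fun x => ((W.m i x : ℝ) : ℂ)⁻¹ *
    ∑' y : V, Set.indicator Λ
      (fun y => ((W.m (i + 1) (Fin.snoc x y) : ℝ) : ℂ) * g (Fin.snoc x y)) y

/-- The codifferential `δ_{i+1} : C_c^{i+1}(V) → C_c^i(V)` (paper index `i+1`). -/
noncomputable def delta (G : WG V) {n : ℕ} (W : CliqueWeights G n) (i : ℕ)
    (g : (Fin (i + 2) → V) → ℂ) : (Fin (i + 1) → V) → ℂ :=
  deltaOn G W Set.univ i g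

/-- Squared `ℓ²(m_i)` norm: `‖f‖² = (1/(i+1)!) Σ_σ m_i(σ) |f(σ)|²`. -/
noncomputable def norm2 {G : WG V} {n : ℕ} (W : CliqueWeights G n) (i : ℕ)
    (f : (Fin (i + 1) → V) → ℂ) : ℝ :=
  ((Nat.factorial (i + 1) : ℝ))⁻¹ * ∑' x : Fin (i + 1) → V, W.m i x * ‖f x‖ ^ 2

/-- Membership in `ℓ²(m_i)`. -/
def MemL2 {G : WG V} {n : ℕ} (W : CliqueWeights G n) (i : ℕ)
    (f : (Fin (i + 1) → V) → ℂ) : Prop :=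
  Summable (fun x : Fin (i + 1) → V => W.m i x * ‖f x‖ ^ 2)

/-- The `ℓ²(m_i)` inner product `⟨f,g⟩ = (1/(i+1)!) Σ_σ m_i(σ) f(σ) conj (g σ)`. -/
noncomputable def inner2 {G : WG V} {n : ℕ} (W : CliqueWeights G n) (i : ℕ)
    (f g : (Fin (i + 1) → V) → ℂ) : ℂ :=
  ((Nat.factorial (i + 1) : ℂ))⁻¹ *
    ∑' x : Fin (i + 1) → V, ((W.m i x : ℝ) : ℂ) * f x * (starRingEnd ℂ) (g x)

/-- Convergence `u k → f` in `ℓ²(m_i)`. -/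
def TendstoL2 {G : WG V} {n : ℕ} (W : CliqueWeights G n) (i : ℕ)
    (u : ℕ → (Fin (i + 1) → V) → ℂ) (f : (Fin (i + 1) → V) → ℂ) : Prop :=
  Tendsto (fun k => norm2 W i (fun x => u k x - f x)) atTop (𝓝 0)

/-- The Gauss–Bonnet operator `D = d + δ` acting componentwise on cochain families:
`(DF)_i = d_i f_{i-1} + δ_{i+1} f_{i+1}` with the end terms absent. -/
noncomputable def Dop (G : WG V) {n : ℕ} (W : CliqueWeights G n)
    (f : ∀ i : ℕ, (Fin (i + 1) → V) → ℂ) : ∀ i : ℕ, (Fin (i + 1) → V) → ℂ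
  | 0 => delta G W 0 (f 1)
  | (i + 1) =>
      if i + 1 ≤ n then (fun x => d G i (f i) x + delta G W (i + 1) (f (i + 2)) x) else 0

/-- The Laplacian block `L_i = δ_{i+1} d_{i+1} + d_i δ_i` on `C_c^i(V)`
(the `d_iδ_i` term absent for `i = 0`, the `δ_{i+1}d_{i+1}` term absent for `i = n`). -/
noncomputable def Lblock (G : WG V) {n : ℕ} (W : CliqueWeights G n) :
    ∀ i : ℕ, ((Fin (i + 1) → V) → ℂ) → (Fin (i + 1) → V) → ℂ
  | 0 => fun g => if 1 ≤ n then delta G W 0 (d G 0 g) else 0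
  | (i + 1) => fun g x =>
      (if i + 2 ≤ n then delta G W (i + 1) (d G (i + 1) g) x else 0)
        + d G i (delta G W i g) x

/-- A family `(f_0, …, f_n)` of cochains, one in each degree (encoded with `f i = 0`
for `i > n`). -/
def CochainFamily (G : WG V) (n : ℕ) (u : ∀ i : ℕ, (Fin (i + 1) → V) → ℂ) : Prop :=
  (∀ i, IsCochain G i (u i)) ∧ ∀ i, n < i → u i = 0

/-- All components finitely supported, i.e. membership in `⊕_{i=0}^n C_c^i(V)`. -/
def FinSuppFamily (u : ∀ i : ℕ, (Fin (i + 1) → V) → ℂ) : Prop :=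
  ∀ i, (Function.support (u i)).Finite

/-- Membership in `H = ⊕_{i=0}^n ℓ²(m_i)`. -/
def MemL2Family {G : WG V} {n : ℕ} (W : CliqueWeights G n)
    (u : ∀ i : ℕ, (Fin (i + 1) → V) → ℂ) : Prop :=
  ∀ i, MemL2 W i (u i)

/-- Componentwise `ℓ²` convergence of cochain families, i.e. convergence in `H`. -/
def TendstoL2Family {G : WG V} {n : ℕ} (W : CliqueWeights G n)
    (u : ℕ → ∀ i : ℕ, (Fin (i + 1) → V) → ℂ)
    (f : ∀ i : ℕ, (Fin (i + 1) → V) → ℂ) : Prop :=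
  ∀ i, TendstoL2 W i (fun k => u k i) (f i)

/-- Extension of a vertex function to tuples by averaging:
`χ̃(x_0,…,x_{k-1}) = (1/k) Σ_j χ(x_j)`. -/
noncomputable def avg (χ : V → ℝ) {k : ℕ} (x : Fin k → V) : ℂ :=
  (k : ℂ)⁻¹ * ∑ j : Fin k, (χ (x j) : ℂ)

/-- The discrete gradient energy of a vertex function `χ` at a `j`-simplex `x` (relative to
the region `Λ`): `(1/m_j(x)) Σ_{y ∈ F(x) ∩ Λ} m_{j+1}(x,y) |d_{j+1} χ̃ (x,y)|²`. -/
noncomputable def gradEnergyOn {G : WG V} {n : ℕ} (W : CliqueWeights G n) (Λ : Set V)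
    (j : ℕ) (χ : V → ℝ) (x : Fin (j + 1) → V) : ℝ :=
  (W.m j x)⁻¹ * ∑' y : V, Set.indicator Λ
    (fun y => W.m (j + 1) (Fin.snoc x y) *
      ‖dOn G Λ j (fun σ : Fin (j + 1) → V => avg χ σ) (Fin.snoc x y)‖ ^ 2) y

/-- `(O, χ)` is a system of plateau cut-offs witnessing global `χ`-completeness of the part
of the complex lying over `Λ`: `(O k)` is an increasing exhaustion of `Λ` by finite sets,
the `χ k` are finitely supported vertex functions whose averages equal `1` on every simplex
with all vertices in `O k`, with a uniform discrete-gradient energy bound in all degrees. -/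
def IsChiWitnessOn {G : WG V} {n : ℕ} (W : CliqueWeights G n) (Λ : Set V)
    (O : ℕ → Set V) (χ : ℕ → V → ℝ) : Prop :=
  (∀ k, (O k).Finite) ∧ Monotone O ∧ (∀ k, O k ⊆ Λ) ∧ (⋃ k, O k) = Λ ∧
  (∀ k, (Function.support (χ k)).Finite) ∧
  (∀ k (i : ℕ), i ≤ n → ∀ x : Fin (i + 1) → V, IsSimplex G x → (∀ j, x j ∈ Λ) →
      (∀ j, x j ∈ O k) → avg (χ k) x = 1) ∧
  ∃ C > 0, ∀ k (j : ℕ), j + 1 ≤ n → ∀ x : Fin (j + 1) → V,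
      IsSimplex G x → (∀ a, x a ∈ Λ) → gradEnergyOn W Λ j (χ k) x ≤ C

/-- Global `χ`-completeness of the restriction of the complex to `Λ`. -/
def GloballyChiCompleteOn {G : WG V} {n : ℕ} (W : CliqueWeights G n) (Λ : Set V) : Prop :=
  ∃ O χ, IsChiWitnessOn W Λ O χ

/-- Global `χ`-completeness of the weighted clique `n`-simplicial complex. -/
def GloballyChiComplete {G : WG V} {n : ℕ} (W : CliqueWeights G n) : Prop :=
  GloballyChiCompleteOn W Set.univ

/-- `(O, χ)` witnesses local `χ`-completeness at level `ℓ`: cut-offs are required only on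
`ℓ`-simplices, and the energy bound only in degree `ℓ`. -/
def IsChiWitnessAtLevel {G : WG V} {n : ℕ} (W : CliqueWeights G n) (ℓ : ℕ)
    (O : ℕ → Set V) (χ : ℕ → V → ℝ) : Prop :=
  (∀ k, (O k).Finite) ∧ Monotone O ∧ (⋃ k, O k) = Set.univ ∧
  (∀ k, (Function.support (χ k)).Finite) ∧
  (∀ k (x : Fin (ℓ + 1) → V), IsSimplex G x → (∀ j, x j ∈ O k) → avg (χ k) x = 1) ∧
  ∃ C > 0, ∀ k (j : ℕ), j + 1 = ℓ → ∀ x : Fin (j + 1) → V,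
      IsSimplex G x → gradEnergyOn W Set.univ j (χ k) x ≤ C

/-- Local `χ`-completeness at level `ℓ`. -/
def LocallyChiCompleteAtLevel {G : WG V} {n : ℕ} (W : CliqueWeights G n) (ℓ : ℕ) : Prop :=
  ∃ O χ, IsChiWitnessAtLevel W ℓ O χ

/-- Essential self-adjointness of the Gauss–Bonnet operator `D = d + δ`, phrased as
`D_min = D_max`: every `u` in the maximal domain (i.e. `u ∈ H` with the pointwise-defined
`Du ∈ H`) is approximated, in the graph norm of `D`, by finitely supported cochain
families (elements of `⊕_{i=0}^n C_c^i(V)`). -/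
def ESA_D {G : WG V} {n : ℕ} (W : CliqueWeights G n) : Prop :=
  ∀ u : ∀ i : ℕ, (Fin (i + 1) → V) → ℂ,
    CochainFamily G n u → MemL2Family W u → MemL2Family W (Dop G W u) →
    ∃ uk : ℕ → ∀ i : ℕ, (Fin (i + 1) → V) → ℂ,
      (∀ k, CochainFamily G n (uk k) ∧ FinSuppFamily (uk k)) ∧
      TendstoL2Family W uk u ∧
      TendstoL2Family W (fun k => Dop G W (uk k)) (Dop G W u)

/-- Essential self-adjointness of the Hodge Laplacian `L = D²`, phrased as `L_min = L_max`
via graph-norm approximation from `⊕_{i=0}^n C_c^i(V)`. -/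
def ESA_L {G : WG V} {n : ℕ} (W : CliqueWeights G n) : Prop :=
  ∀ u : ∀ i : ℕ, (Fin (i + 1) → V) → ℂ,
    CochainFamily G n u → MemL2Family W u → MemL2Family W (Dop G W (Dop G W u)) →
    ∃ uk : ℕ → ∀ i : ℕ, (Fin (i + 1) → V) → ℂ,
      (∀ k, CochainFamily G n (uk k) ∧ FinSuppFamily (uk k)) ∧
      TendstoL2Family W uk u ∧
      TendstoL2Family W (fun k => Dop G W (Dop G W (uk k))) (Dop G W (Dop G W u))

/-! ### Simplices, permutations and faces -/

section Combinatorics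

variable {G : WG V} {n : ℕ}

lemma weight_pos_iff (W : CliqueWeights G n) {i : ℕ} (hi : i ≤ n) (x : Fin (i + 1) → V) :
    0 < W.m i x ↔ IsSimplex G x := by
  rcases Nat.eq_zero_or_pos i with rfl | h
  · rw [W.m_zero]
    refine ⟨fun _ => ⟨fun a b _ => Fin.ext (by omega), fun a b hab => ?_⟩,
      fun _ => G.m₀_pos _⟩
    exact absurd (Fin.ext (by omega)) hab
  · exact W.pos_iff i h hi x

lemma weight_eq_zero (W : CliqueWeights G n) {i : ℕ} (hi : i ≤ n) {x : Fin (i + 1) → V}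
    (h : ¬ IsSimplex G x) : W.m i x = 0 :=
  le_antisymm (not_lt.1 fun h' => h ((weight_pos_iff W hi x).1 h')) (W.nonneg i x)

lemma weight_perm (W : CliqueWeights G n) {i : ℕ} (hi : i ≤ n) (x : Fin (i + 1) → V)
    (σ : Equiv.Perm (Fin (i + 1))) : W.m i (x ∘ σ) = W.m i x := by
  rcases Nat.eq_zero_or_pos i with rfl | h
  · congr 1
    funext a
    exact congrArg x (Fin.ext (by omega))
  · exact W.perm_inv i h hi x σ

lemma IsSimplex.comp {k l : ℕ} {x : Fin k → V} (hx : IsSimplex G x) {e : Fin l → Fin k}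
    (he : Function.Injective e) : IsSimplex G (x ∘ e) :=
  ⟨hx.1.comp he, fun _ _ hab => hx.2 _ _ (he.ne hab)⟩

lemma isSimplex_perm {k : ℕ} {x : Fin k → V} (σ : Equiv.Perm (Fin k)) :
    IsSimplex G (x ∘ σ) ↔ IsSimplex G x := by
  refine ⟨fun h => ?_, fun h => h.comp σ.injective⟩
  have := h.comp (σ⁻¹).injective
  rwa [Function.comp_assoc, ← Equiv.Perm.coe_mul, mul_inv_cancel, Equiv.Perm.coe_one,
    Function.comp_id] at this

lemma insertNth_eq_cons {k : ℕ} (j : Fin (k + 1)) (y : V) (x : Fin k → V) :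
    (Fin.insertNth j y x : Fin (k + 1) → V) = (Fin.cons y x : Fin (k + 1) → V) ∘ j.cycleRange := by
  funext a
  refine Fin.succAboveCases j ?_ (fun b => ?_) a
  · simp [Fin.cycleRange_self]
  · simp [Fin.cycleRange_succAbove]

lemma snoc_eq_cons {k : ℕ} (y : V) (x : Fin k → V) :
    (Fin.snoc x y : Fin (k + 1) → V) =
      (Fin.cons y x : Fin (k + 1) → V) ∘ (Fin.last k).cycleRange := by
  rw [← insertNth_eq_cons, Fin.insertNth_last']

/-- Extension of a permutation of the last `k` positions by fixing position `0`. -/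
def extPerm {k : ℕ} (σ : Equiv.Perm (Fin k)) : Equiv.Perm (Fin (k + 1)) :=
  Equiv.Perm.decomposeFin.symm (0, σ)

@[simp] lemma extPerm_zero {k : ℕ} (σ : Equiv.Perm (Fin k)) : extPerm σ 0 = 0 := by
  simp [extPerm]

@[simp] lemma extPerm_succ {k : ℕ} (σ : Equiv.Perm (Fin k)) (a : Fin k) :
    extPerm σ a.succ = (σ a).succ := by
  simp [extPerm]

lemma sign_extPerm {k : ℕ} (σ : Equiv.Perm (Fin k)) :
    Equiv.Perm.sign (extPerm σ) = Equiv.Perm.sign σ := by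
  simp [extPerm]

lemma cons_comp_perm {k : ℕ} (y : V) (x : Fin k → V) (σ : Equiv.Perm (Fin k)) :
    (Fin.cons y (x ∘ σ) : Fin (k + 1) → V) = (Fin.cons y x : Fin (k + 1) → V) ∘ extPerm σ := by
  funext a
  refine Fin.cases ?_ (fun b => ?_) a <;> simp

lemma IsAlternating.insertNth {k : ℕ} {v : (Fin (k + 1) → V) → ℂ} (hv : IsAlternating v)
    (j : Fin (k + 1)) (y : V) (x : Fin k → V) :
    v (Fin.insertNth j y x) = (-1) ^ (j : ℕ) * v (Fin.cons y x) := by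
  rw [insertNth_eq_cons, hv, Fin.sign_cycleRange]
  simp

lemma IsAlternating.snoc {k : ℕ} {v : (Fin (k + 1) → V) → ℂ} (hv : IsAlternating v)
    (y : V) (x : Fin k → V) :
    v (Fin.snoc x y) = (-1) ^ k * v (Fin.cons y x) := by
  rw [← Fin.insertNth_last', hv.insertNth]
  simp

lemma weight_insertNth (W : CliqueWeights G n) {i : ℕ} (hi : i + 1 ≤ n)
    (j : Fin (i + 2)) (y : V) (x : Fin (i + 1) → V) :
    W.m (i + 1) (Fin.insertNth j y x) = W.m (i + 1) (Fin.snoc x y) := by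
  rw [insertNth_eq_cons, snoc_eq_cons, weight_perm W hi, weight_perm W hi]

lemma isSimplex_of_snoc {k : ℕ} {x : Fin k → V} {y : V}
    (h : IsSimplex G (Fin.snoc x y : Fin (k + 1) → V)) : IsSimplex G x := by
  have := h.comp (Fin.castSucc_injective k)
  rwa [show (Fin.snoc x y : Fin (k + 1) → V) ∘ Fin.castSucc = x by funext a; simp] at this

lemma adj_of_snoc {k : ℕ} {x : Fin (k + 1) → V} {y : V}
    (h : IsSimplex G (Fin.snoc x y : Fin (k + 2) → V)) : G.Adj (x 0) y := by
  have := h.2 (Fin.castSucc 0) (Fin.last _) (by simp [Fin.ext_iff])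
  rwa [Fin.snoc_castSucc, Fin.snoc_last] at this

/-- Only finitely many vertices extend a given tuple to a simplex, by local finiteness. -/
lemma finite_snoc (W : CliqueWeights G n) {i : ℕ} (hi : i + 1 ≤ n) (x : Fin (i + 1) → V) :
    {y | W.m (i + 1) (Fin.snoc x y) ≠ 0}.Finite := by
  refine (G.locFin (x 0)).subset fun y hy => ?_
  exact adj_of_snoc (by_contra fun h => hy (weight_eq_zero W hi h))

lemma weight_snoc_eq_zero (W : CliqueWeights G n) {i : ℕ} (hi : i + 1 ≤ n)
    {x : Fin (i + 1) → V} (h : W.m i x = 0) (y : V) : W.m (i + 1) (Fin.snoc x y) = 0 :=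
  weight_eq_zero W hi fun hs =>
    ((weight_pos_iff W (by omega) x).2 (isSimplex_of_snoc hs)).ne' h

/-- The part of `d` that is not cut off to simplices preserves alternation: a permutation `σ`
carries the face opposite to `j` onto the face opposite to `σ j`. -/
lemma alternating_coboundary {k : ℕ} {f : (Fin k → V) → ℂ} (hf : IsAlternating f) :
    IsAlternating (fun x : Fin (k + 1) → V =>
      ∑ j : Fin (k + 1), (-1 : ℂ) ^ (j : ℕ) * f (x ∘ j.succAbove)) := by
  intro x σ
  simp only
  rw [Finset.mul_sum, ← Equiv.sum_comp σ
    (fun j => ((Equiv.Perm.sign σ : ℤ) : ℂ) * ((-1 : ℂ) ^ (j : ℕ) * f (x ∘ j.succAbove)))]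
  refine Finset.sum_congr rfl fun j _ => ?_
  -- `ρ` is the permutation induced by `σ` on faces, extended by fixing position `0`
  set ρ : Equiv.Perm (Fin (k + 1)) := (σ j).cycleRange * σ * (j.cycleRange)⁻¹ with hρ
  have hρ0 : ρ 0 = 0 := by
    simp [hρ, Equiv.Perm.mul_apply, Equiv.Perm.inv_def, Fin.cycleRange_symm_zero,
      Fin.cycleRange_self]
  obtain ⟨τ, hτ⟩ : ∃ τ, ρ = extPerm τ := by
    refine ⟨(Equiv.Perm.decomposeFin ρ).2, ?_⟩
    have h1 : (Equiv.Perm.decomposeFin ρ).1 = 0 := by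
      have h2 := Equiv.Perm.decomposeFin_symm_apply_zero (Equiv.Perm.decomposeFin ρ).1
        (Equiv.Perm.decomposeFin ρ).2
      rw [Prod.mk.eta, Equiv.symm_apply_apply, hρ0] at h2
      exact h2.symm
    rw [extPerm, ← h1, Prod.mk.eta, Equiv.symm_apply_apply]
  have hcomp : x ∘ σ ∘ j.succAbove = (x ∘ (σ j).succAbove) ∘ τ := by
    funext a
    have h1 : ρ a.succ = (τ a).succ := by rw [hτ, extPerm_succ]
    have h2 : (σ j).cycleRange (σ (j.succAbove a)) = (τ a).succ := by
      rw [← h1, hρ]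
      simp [Equiv.Perm.mul_apply, Equiv.Perm.inv_def, Fin.cycleRange_symm_succ]
    have h3 : σ (j.succAbove a) = (σ j).succAbove (τ a) := by
      rw [← Fin.cycleRange_symm_succ (σ j), ← h2, Equiv.symm_apply_apply]
    simp [h3]
  have hsign : Equiv.Perm.sign τ = (-1) ^ ((σ j : Fin (k + 1)) : ℕ) * Equiv.Perm.sign σ
      * (-1) ^ (j : ℕ) := by
    rw [← sign_extPerm, ← hτ, hρ]
    simp [Fin.sign_cycleRange]
  rw [Function.comp_assoc, hcomp, hf, hsign]
  push_cast
  have hj : ((-1 : ℂ) ^ (j : ℕ)) * (-1) ^ (j : ℕ) = 1 := by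
    rw [← mul_pow]; simp
  linear_combination ((-1) ^ ((σ j : Fin (k + 1)) : ℕ) * (Equiv.Perm.sign σ : ℤ)
    * f (x ∘ (σ j).succAbove)) * hj

lemma isCochain_d {i : ℕ} {f : (Fin (i + 1) → V) → ℂ} (hf : IsCochain G i f) :
    IsCochain G (i + 1) (d G i f) := by
  constructor
  · intro x σ
    by_cases h : IsSimplex G x
    · have h' := (isSimplex_perm σ).2 h
      have := alternating_coboundary hf.1 x σ
      simpa [d, dOn, h, h'] using this
    · have h' : ¬ IsSimplex G (x ∘ σ) := fun hh => h ((isSimplex_perm σ).1 hh)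
      simp [d, dOn, h, h']
  · intro x h
    simp [d, dOn, h]

lemma d_apply {i : ℕ} (f : (Fin (i + 1) → V) → ℂ) {x : Fin (i + 2) → V} (h : IsSimplex G x) :
    d G i f x = ∑ j : Fin (i + 2), (-1 : ℂ) ^ (j : ℕ) * f (x ∘ j.succAbove) := by
  simp [d, dOn, h]

lemma delta_apply (W : CliqueWeights G n) (i : ℕ) (g : (Fin (i + 2) → V) → ℂ)
    (x : Fin (i + 1) → V) :
    delta G W i g x = ((W.m i x : ℝ) : ℂ)⁻¹ *
      ∑' y : V, ((W.m (i + 1) (Fin.snoc x y) : ℝ) : ℂ) * g (Fin.snoc x y) := by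
  simp [delta, deltaOn]

lemma weight_mul_delta (W : CliqueWeights G n) {i : ℕ} (hi : i + 1 ≤ n)
    (g : (Fin (i + 2) → V) → ℂ) (x : Fin (i + 1) → V) :
    ((W.m i x : ℝ) : ℂ) * delta G W i g x =
      ∑' y : V, ((W.m (i + 1) (Fin.snoc x y) : ℝ) : ℂ) * g (Fin.snoc x y) := by
  rw [delta_apply]
  by_cases h : W.m i x = 0
  · simp [h, weight_snoc_eq_zero W hi h]
  · rw [mul_inv_cancel_left₀ (by exact_mod_cast h)]

lemma isCochain_delta (W : CliqueWeights G n) {i : ℕ} (hi : i + 1 ≤ n)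
    {g : (Fin (i + 2) → V) → ℂ} (hg : IsCochain G (i + 1) g) :
    IsCochain G i (delta G W i g) := by
  constructor
  · intro x σ
    rw [delta_apply, delta_apply, weight_perm W (by omega), mul_left_comm]
    congr 1
    rw [← tsum_mul_left]
    refine tsum_congr fun y => ?_
    rw [hg.1.snoc, hg.1.snoc, cons_comp_perm, hg.1, sign_extPerm, snoc_eq_cons, snoc_eq_cons,
      weight_perm W hi, weight_perm W hi, cons_comp_perm, weight_perm W hi]
    ring
  · intro x h
    rw [delta_apply, weight_eq_zero W (by omega) h]
    simp

lemma finite_support_weight_snoc (W : CliqueWeights G n) {i : ℕ} (hi : i + 1 ≤ n)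
    {R : Type*} [MulZeroClass R] (ι : ℝ → R) (hι : ι 0 = 0)
    (x : Fin (i + 1) → V) (h : V → R) :
    (Function.support fun y => ι (W.m (i + 1) (Fin.snoc x y)) * h y).Finite := by
  refine (finite_snoc W hi x).subset fun y hy h0 => hy ?_
  simp [h0, hι]

lemma summable_snoc (W : CliqueWeights G n) {i : ℕ} (hi : i + 1 ≤ n)
    (x : Fin (i + 1) → V) (h : V → ℂ) :
    Summable fun y => ((W.m (i + 1) (Fin.snoc x y) : ℝ) : ℂ) * h y :=
  summable_of_hasFiniteSupport (finite_support_weight_snoc W hi _ (by simp) x h)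

lemma summable_snoc_real (W : CliqueWeights G n) {i : ℕ} (hi : i + 1 ≤ n)
    (x : Fin (i + 1) → V) (h : V → ℝ) :
    Summable fun y => W.m (i + 1) (Fin.snoc x y) * h y :=
  summable_of_hasFiniteSupport (finite_support_weight_snoc W hi id (by simp) x h)

lemma d_add (i : ℕ) (f g : (Fin (i + 1) → V) → ℂ) : d G i (f + g) = d G i f + d G i g := by
  funext x
  by_cases h : IsSimplex G x
  · simp [d_apply _ h, mul_add, Finset.sum_add_distrib]
  · simp [d, dOn, h]

lemma d_smul (i : ℕ) (c : ℂ) (f : (Fin (i + 1) → V) → ℂ) : d G i (c • f) = c • d G i f := by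
  funext x
  by_cases h : IsSimplex G x
  · simp [d_apply _ h, Finset.mul_sum, mul_left_comm]
  · simp [d, dOn, h]

lemma delta_add (W : CliqueWeights G n) {i : ℕ} (hi : i + 1 ≤ n)
    (f g : (Fin (i + 2) → V) → ℂ) :
    delta G W i (f + g) = delta G W i f + delta G W i g := by
  funext x
  simp only [delta_apply, Pi.add_apply, mul_add]
  rw [Summable.tsum_add (summable_snoc W hi x _) (summable_snoc W hi x _), mul_add]

lemma delta_smul (W : CliqueWeights G n) (i : ℕ) (c : ℂ) (f : (Fin (i + 2) → V) → ℂ) :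
    delta G W i (c • f) = c • delta G W i f := by
  funext x
  simp only [delta_apply, Pi.smul_apply, smul_eq_mul]
  rw [mul_left_comm]
  congr 1
  rw [← tsum_mul_left]
  exact tsum_congr fun y => mul_left_comm _ _ _

lemma delta_zero (W : CliqueWeights G n) (i : ℕ) :
    delta G W i (0 : (Fin (i + 2) → V) → ℂ) = 0 := by
  funext x
  simp [delta_apply]

lemma d_zero (i : ℕ) : d G i (0 : (Fin (i + 1) → V) → ℂ) = 0 := by
  funext x
  by_cases h : IsSimplex G x
  · simp [d_apply _ h]
  · simp [d, dOn, h]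

lemma finite_support_delta (W : CliqueWeights G n) (i : ℕ) {g : (Fin (i + 2) → V) → ℂ}
    (hg : (Function.support g).Finite) : (Function.support (delta G W i g)).Finite := by
  refine (hg.image fun τ => τ ∘ Fin.castSucc).subset fun x hx => ?_
  by_contra hcon
  apply hx
  rw [delta_apply]
  have : ∀ y, g (Fin.snoc x y) = 0 := fun y => by
    by_contra h
    refine hcon ⟨Fin.snoc x y, h, ?_⟩
    funext a; simp
  simp [this]

lemma finite_support_d {i : ℕ} {f : (Fin (i + 1) → V) → ℂ}
    (hf : (Function.support f).Finite) : (Function.support (d G i f)).Finite := by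
  have hfin : ∀ j : Fin (i + 2), (⋃ x ∈ Function.support f,
      (fun y => (Fin.insertNth j y x : Fin (i + 2) → V)) '' {y | 0 < G.m₁ (x 0) y}).Finite :=
    fun j => hf.biUnion fun x _ => (G.locFin (x 0)).image _
  refine (Set.finite_iUnion hfin).subset fun τ hτ => ?_
  have hs : IsSimplex G τ := by
    by_contra h
    exact hτ (by simp [d, dOn, h])
  rw [Function.mem_support, d_apply _ hs] at hτ
  obtain ⟨j, -, hj⟩ := Finset.exists_ne_zero_of_sum_ne_zero hτ
  refine Set.mem_iUnion.2 ⟨j, Set.mem_iUnion₂.2 ⟨τ ∘ j.succAbove, right_ne_zero_of_mul hj, ?_⟩⟩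
  refine ⟨τ j, hs.2 _ _ (Fin.succAbove_ne j 0), ?_⟩
  exact Fin.insertNth_self_removeNth j τ

end Combinatorics

/-! ### Green's formula and its consequences -/

section Green

variable {G : WG V} {n : ℕ}

/-- The inner product `inner2` without its factorial prefactor. -/
noncomputable def ip (W : CliqueWeights G n) (i : ℕ) (f g : (Fin (i + 1) → V) → ℂ) : ℂ :=
  ∑' x : Fin (i + 1) → V, ((W.m i x : ℝ) : ℂ) * f x * (starRingEnd ℂ) (g x)

lemma ip_conj (W : CliqueWeights G n) (i : ℕ) (f g : (Fin (i + 1) → V) → ℂ) :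
    (starRingEnd ℂ) (ip W i f g) = ip W i g f := by
  rw [ip, Complex.conj_tsum, ip]
  refine tsum_congr fun x => ?_
  simp only [map_mul, Complex.conj_ofReal, Complex.conj_conj]
  ring

/-- A tuple of length `k + 1` as its face opposite to position `j` together with its `j`-th
entry. -/
def faceEquiv (V : Type*) {k : ℕ} (j : Fin (k + 1)) : (Fin k → V) × V ≃ (Fin (k + 1) → V) :=
  (Equiv.prodComm _ _).trans (Fin.insertNthEquiv (fun _ => V) j)

lemma faceEquiv_apply {k : ℕ} (j : Fin (k + 1)) (p : (Fin k → V) × V) :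
    faceEquiv V j p = Fin.insertNth j p.2 p.1 := rfl

lemma faceEquiv_comp {k : ℕ} (j : Fin (k + 1)) (p : (Fin k → V) × V) :
    faceEquiv V j p ∘ j.succAbove = p.1 := by
  funext a
  simp [faceEquiv_apply]

/-- The constant in Green's formula for the unnormalised inner products: `delta` extends a simplex
at its last position, whence the sign, and `d` has `i + 2` faces to sum over. -/
noncomputable def greenConst (i : ℕ) : ℝ := (-1) ^ (i + 1) * (i + 2)

lemma abs_greenConst (i : ℕ) : |greenConst i| = i + 2 := by
  rw [greenConst, abs_mul, abs_pow, abs_neg, abs_one, one_pow, one_mul, abs_of_nonneg]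
  positivity

lemma greenConst_ne_zero (i : ℕ) : (greenConst i : ℂ) ≠ 0 := by
  have : greenConst i ≠ 0 := by
    rw [← abs_pos, abs_greenConst]; positivity
  exact_mod_cast this

lemma green_of_summable (W : CliqueWeights G n) {i : ℕ} (hi : i + 1 ≤ n)
    (g : (Fin (i + 1) → V) → ℂ) {v : (Fin (i + 2) → V) → ℂ} (hv : IsAlternating v)
    (hs : Summable fun p : (Fin (i + 1) → V) × V =>
      ((W.m (i + 1) (Fin.snoc p.1 p.2) : ℝ) : ℂ) * g p.1 *
        (starRingEnd ℂ) (v (Fin.snoc p.1 p.2))) :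
    ip W (i + 1) (d G i g) v = greenConst i * ip W i g (delta G W i v) := by
  set F : (Fin (i + 1) → V) × V → ℂ := fun p =>
      ((W.m (i + 1) (Fin.snoc p.1 p.2) : ℝ) : ℂ) * g p.1 *
        (starRingEnd ℂ) (v (Fin.snoc p.1 p.2)) with hF
  have hface : ∀ j : Fin (i + 2), HasSum (fun τ : Fin (i + 2) → V =>
      (-1 : ℂ) ^ (j : ℕ) * (((W.m (i + 1) τ : ℝ) : ℂ) * g (τ ∘ j.succAbove) *
        (starRingEnd ℂ) (v τ))) ((-1) ^ (i + 1) * ∑' p, F p) := by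
    intro j
    rw [← (faceEquiv V j).hasSum_iff]
    refine HasSum.congr_fun (hs.hasSum.mul_left ((-1 : ℂ) ^ (i + 1))) fun p => ?_
    rw [Function.comp_apply, faceEquiv_comp, faceEquiv_apply, weight_insertNth W hi,
      hv.insertNth]
    simp only [hF, hv.snoc, map_mul, map_pow, map_neg, map_one]
    have h1 : ((-1 : ℂ) ^ (j : ℕ)) * (-1) ^ (j : ℕ) = 1 := by rw [← mul_pow]; simp
    have h2 : ((-1 : ℂ) ^ (i + 1)) * (-1) ^ (i + 1) = 1 := by rw [← mul_pow]; simp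
    linear_combination ((W.m (i + 1) (Fin.snoc p.1 p.2) : ℝ) : ℂ) * g p.1 *
        (starRingEnd ℂ) (v (Fin.cons p.2 p.1)) * (h1 - h2)
  have hsum := hasSum_sum (s := Finset.univ) fun j _ => hface j
  have hL : ip W (i + 1) (d G i g) v = (i + 2 : ℂ) * ((-1) ^ (i + 1) * ∑' p, F p) := by
    rw [ip]
    refine (HasSum.tsum_eq ?_)
    convert hsum using 1
    · funext τ
      by_cases h : IsSimplex G τ
      · rw [d_apply _ h, Finset.mul_sum, Finset.sum_mul]
        exact Finset.sum_congr rfl fun j _ => by ring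
      · simp [weight_eq_zero W hi h]
    · simp
  have hR : ∑' p, F p = ip W i g (delta G W i v) := by
    rw [hs.tsum_prod, ip]
    refine tsum_congr fun x => ?_
    rw [mul_right_comm, mul_comm _ (g x), ← Complex.conj_ofReal (W.m i x), ← map_mul,
      weight_mul_delta W hi, Complex.conj_tsum, ← tsum_mul_left]
    refine tsum_congr fun y => ?_
    simp only [hF, map_mul, Complex.conj_ofReal]
    ring
  rw [hL, hR, greenConst]
  push_cast
  ring

lemma green_left (W : CliqueWeights G n) {i : ℕ} (hi : i + 1 ≤ n)
    {g : (Fin (i + 1) → V) → ℂ} (hg : (Function.support g).Finite)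
    {v : (Fin (i + 2) → V) → ℂ} (hv : IsAlternating v) :
    ip W (i + 1) (d G i g) v = greenConst i * ip W i g (delta G W i v) := by
  refine green_of_summable W hi g hv (summable_of_hasFiniteSupport ?_)
  have : (⋃ x ∈ Function.support g,
      (fun y => (x, y)) '' {y | W.m (i + 1) (Fin.snoc x y) ≠ 0}).Finite :=
    hg.biUnion fun x _ => (finite_snoc W hi x).image _
  refine this.subset fun p hp => ?_
  have h1 := left_ne_zero_of_mul hp
  refine Set.mem_iUnion₂.2 ⟨p.1, right_ne_zero_of_mul h1, p.2, ?_, rfl⟩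
  exact_mod_cast left_ne_zero_of_mul h1

lemma green_right (W : CliqueWeights G n) {i : ℕ} (hi : i + 1 ≤ n)
    (g : (Fin (i + 1) → V) → ℂ)
    {v : (Fin (i + 2) → V) → ℂ} (hv : IsAlternating v) (hfin : (Function.support v).Finite) :
    ip W (i + 1) (d G i g) v = greenConst i * ip W i g (delta G W i v) := by
  refine green_of_summable W hi g hv (summable_of_hasFiniteSupport ?_)
  refine (hfin.image (faceEquiv V (Fin.last (i + 1))).symm).subset fun p hp => ?_
  refine ⟨Fin.snoc p.1 p.2, ?_, ?_⟩
  · intro h0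
    apply right_ne_zero_of_mul hp
    rw [h0, map_zero]
  · rw [Equiv.symm_apply_eq, faceEquiv_apply, Fin.insertNth_last']

/-- Finitely supported cochains separate cochains: test `h` against its restriction to the finitely
many tuples with a given vertex set. -/
lemma eq_zero_of_test (W : CliqueWeights G n) {i : ℕ} (hi : i ≤ n)
    {h : (Fin (i + 1) → V) → ℂ} (hh : IsCochain G i h)
    (H : ∀ φ, IsCochain G i φ → (Function.support φ).Finite → ip W i h φ = 0) : h = 0 := by
  classical
  funext x
  by_cases hx : IsSimplex G x
  swap
  · exact hh.2 x hx
  set φ : (Fin (i + 1) → V) → ℂ := fun y => if Set.range y = Set.range x then h y else 0 with hφ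
  have hφc : IsCochain G i φ := by
    refine ⟨fun y σ => ?_, fun y hy => ?_⟩
    · simp only [hφ, EquivLike.range_comp, hh.1 y σ, mul_ite, mul_zero]
    · simp [hφ, hh.2 y hy]
  have hfin : (Function.support φ).Finite := by
    refine (Set.Finite.pi' fun _ : Fin (i + 1) => Set.finite_range x).subset fun y hy a => ?_
    have : Set.range y = Set.range x := by
      by_contra hne
      exact hy (by simp [hφ, hne])
    rw [← this]
    exact Set.mem_range_self a
  have h0 := H φ hφc hfin
  have hterm : ∀ y, ((W.m i y : ℝ) : ℂ) * h y * (starRingEnd ℂ) (φ y)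
      = ((W.m i y * ‖φ y‖ ^ 2 : ℝ) : ℂ) := by
    intro y
    by_cases hy : Set.range y = Set.range x
    · simp only [hφ, hy, if_true]
      rw [mul_assoc, Complex.mul_conj, Complex.normSq_eq_norm_sq]
      push_cast
      ring
    · simp [hφ, hy]
  rw [ip, tsum_congr hterm, ← Complex.ofReal_tsum, Complex.ofReal_eq_zero] at h0
  have hsum : Summable fun y => W.m i y * ‖φ y‖ ^ 2 := by
    refine summable_of_hasFiniteSupport (hfin.subset fun y hy h1 => hy ?_)
    simp [h1]
  have hall := (hasSum_zero_iff_of_nonneg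
    (fun y => mul_nonneg (W.nonneg i y) (sq_nonneg _))).1 (h0 ▸ hsum.hasSum)
  have hx0 := congrFun hall x
  have hm := (weight_pos_iff W hi x).2 hx
  simpa [hφ, hm.ne'] using hx0

lemma delta_delta (W : CliqueWeights G n) {i : ℕ} (hi : i + 2 ≤ n)
    {v : (Fin (i + 3) → V) → ℂ} (hv : IsAlternating v) :
    delta G W i (delta G W (i + 1) v) = 0 := by
  funext x
  rw [delta_apply, Pi.zero_apply]
  simp_rw [weight_mul_delta W hi]
  set h : V → V → ℂ := fun y z =>
    ((W.m (i + 2) (Fin.snoc (Fin.snoc x y : Fin (i + 2) → V) z) : ℝ) : ℂ) *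
      v (Fin.snoc (Fin.snoc x y : Fin (i + 2) → V) z) with hh
  have hanti : ∀ y z, h z y = - h y z := by
    intro y z
    have hsw : (Fin.snoc (Fin.snoc x z : Fin (i + 2) → V) y : Fin (i + 3) → V) =
        (Fin.snoc (Fin.snoc x y : Fin (i + 2) → V) z : Fin (i + 3) → V) ∘
          Equiv.swap (Fin.last (i + 2)) (Fin.castSucc (Fin.last (i + 1))) := by
      funext a
      refine Fin.lastCases ?_ (fun b => ?_) a
      · simp
      · refine Fin.lastCases ?_ (fun c => ?_) b
        · simp
        · rw [Function.comp_apply, Equiv.swap_apply_of_ne_of_ne]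
          · simp
          · exact Fin.castSucc_ne_last _
          · simp [Fin.ext_iff, c.2.ne]
    simp only [hh, hsw, weight_perm W hi]
    rw [hv, Equiv.Perm.sign_swap (Fin.castSucc_ne_last _).symm]
    simp
  have hsupp : (Function.support (Function.uncurry h)).Finite := by
    refine ((G.locFin (x 0)).prod (G.locFin (x 0))).subset fun p hp => ?_
    have hs : IsSimplex G (Fin.snoc (Fin.snoc x p.1 : Fin (i + 2) → V) p.2) := by
      by_contra hns
      exact hp (by simp [Function.uncurry, hh, weight_eq_zero W hi hns])
    refine ⟨adj_of_snoc (isSimplex_of_snoc hs), ?_⟩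
    have := adj_of_snoc hs
    rwa [show (0 : Fin (i + 2)) = Fin.castSucc 0 from rfl, Fin.snoc_castSucc] at this
  have hcomm : ∑' y, ∑' z, h y z = ∑' z, ∑' y, h y z :=
    (Summable.tsum_comm (summable_of_hasFiniteSupport hsupp)).symm
  have : ∑' y, ∑' z, h y z = 0 := by
    have h1 : ∑' z, ∑' y, h y z = - ∑' y, ∑' z, h y z := by
      rw [← tsum_neg]
      refine tsum_congr fun y => ?_
      rw [← tsum_neg]
      exact tsum_congr fun z => hanti y z
    rw [h1] at hcomm
    exact self_eq_neg.1 hcomm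
  rw [this, mul_zero]

/-- `d ∘ d = 0`, obtained from `δ ∘ δ = 0` by duality. -/
lemma d_d (W : CliqueWeights G n) {i : ℕ} (hi : i + 2 ≤ n)
    {f : (Fin (i + 1) → V) → ℂ} (hf : IsCochain G i f) :
    d G (i + 1) (d G i f) = 0 := by
  refine eq_zero_of_test W hi (isCochain_d (isCochain_d hf)) fun φ hφ hfin => ?_
  rw [green_right W hi _ hφ.1 hfin, green_right W (by omega) _ (isCochain_delta W hi hφ).1
    (finite_support_delta W _ hfin), delta_delta W hi hφ.1]
  simp [ip]

/-- `D²` is block diagonal on cochain families. -/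
lemma Dop_Dop_eq (W : CliqueWeights G n)
    {u : ∀ i : ℕ, (Fin (i + 1) → V) → ℂ} (hu : CochainFamily G n u) {i : ℕ} (hi : i ≤ n) :
    Dop G W (Dop G W u) i = Lblock G W i (u i) := by
  have hDsucc : ∀ j, j + 1 ≤ n → Dop G W u (j + 1)
      = d G j (u j) + delta G W (j + 1) (u (j + 2)) := by
    intro j hj
    simp only [Dop, hj, if_true]
    rfl
  have hDbig : ∀ j, n < j → Dop G W u j = 0 := by
    intro j hj
    obtain ⟨k, rfl⟩ : ∃ k, j = k + 1 := ⟨j - 1, by omega⟩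
    simp only [Dop, if_neg (by omega : ¬ k + 1 ≤ n)]
  have hδδ : ∀ j, j + 1 ≤ n → delta G W j (delta G W (j + 1) (u (j + 2))) = 0 := by
    intro j hj
    rcases Nat.lt_or_ge n (j + 2) with h | h
    · rw [hu.2 _ h, delta_zero, delta_zero]
    · exact delta_delta W h (hu.1 _).1
  -- the upper half `δ (D u)_{i+1}` of `(D² u)_i`
  have hup : ∀ j, j ≤ n → delta G W j (Dop G W u (j + 1))
      = if j + 1 ≤ n then delta G W j (d G j (u j)) else 0 := by
    intro j hj
    split_ifs with h
    · rw [hDsucc j h, delta_add W h, hδδ j h, add_zero]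
    · rw [hDbig _ (by omega), delta_zero]
  cases i with
  | zero =>
    change delta G W 0 (Dop G W u 1) = _
    rw [hup 0 hi]
    simp only [Lblock]
  | succ i =>
    have h1 : Dop G W (Dop G W u) (i + 1)
        = d G i (Dop G W u i) + delta G W (i + 1) (Dop G W u (i + 2)) := by
      simp only [Dop.eq_2 G W (Dop G W u), hi, if_true]
      rfl
    have h2 : d G i (Dop G W u i) = d G i (delta G W i (u (i + 1))) := by
      cases i with
      | zero => rfl
      | succ j =>
        rw [hDsucc j (by omega), d_add, d_d W hi (hu.1 j), zero_add]
    rw [h1, h2, hup _ hi]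
    funext x
    simp only [Lblock, Pi.add_apply]
    rw [add_comm]
    congr 1
    split_ifs <;> rfl

end Green

/-! ### Approximation in graph norm from symmetry of the maximal operator -/

section Approximation

variable {X : Type*}

/-- The element of `ℓ²(X ⊕ X)` encoding the pair `(f, g)` of elements of the weighted space
`ℓ²(X, m)`. -/
noncomputable def pairVec (m : X → ℝ) (f g : X → ℂ) : X ⊕ X → ℂ :=
  Sum.elim (fun x => ((√(m x) : ℝ) : ℂ) * f x) (fun x => ((√(m x) : ℝ) : ℂ) * g x)

lemma norm_sqrt_mul_sq {r : ℝ} (hr : 0 ≤ r) (z : ℂ) :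
    ‖((√r : ℝ) : ℂ) * z‖ ^ 2 = r * ‖z‖ ^ 2 := by
  rw [norm_mul, mul_pow, Complex.norm_real, Real.norm_eq_abs, sq_abs, Real.sq_sqrt hr]

lemma memℓp_pairVec {m : X → ℝ} (hm : ∀ x, 0 ≤ m x) {f g : X → ℂ}
    (hf : Summable fun x => m x * ‖f x‖ ^ 2) (hg : Summable fun x => m x * ‖g x‖ ^ 2) :
    Memℓp (pairVec m f g) 2 := by
  rw [memℓp_gen_iff (by simp)]
  simp only [ENNReal.toReal_ofNat, Real.rpow_ofNat]
  refine Summable.sum _ ?_ ?_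
  · simpa only [Function.comp_def, pairVec, Sum.elim_inl, norm_sqrt_mul_sq (hm _)] using hf
  · simpa only [Function.comp_def, pairVec, Sum.elim_inr, norm_sqrt_mul_sq (hm _)] using hg

lemma summable_mul_conj {m : X → ℝ} (hm : ∀ x, 0 ≤ m x) {f g : X → ℂ}
    (hf : Summable fun x => m x * ‖f x‖ ^ 2) (hg : Summable fun x => m x * ‖g x‖ ^ 2) :
    Summable fun x => ((m x : ℝ) : ℂ) * f x * (starRingEnd ℂ) (g x) := by
  refine Summable.of_norm_bounded (hf.add hg) fun x => ?_
  rw [norm_mul, norm_mul, RCLike.norm_conj, Complex.norm_real, Real.norm_of_nonneg (hm x)]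
  nlinarith [hm x, mul_nonneg (hm x) (sq_nonneg (‖f x‖ - ‖g x‖)),
    mul_nonneg (hm x) (sq_nonneg (‖f x‖)), mul_nonneg (hm x) (sq_nonneg (‖g x‖))]

lemma sqrt_inner {r : ℝ} (hr : 0 ≤ r) (z w : ℂ) :
    inner ℂ (((√r : ℝ) : ℂ) * z) (((√r : ℝ) : ℂ) * w) = (r : ℂ) * w * (starRingEnd ℂ) z := by
  rw [RCLike.inner_apply, map_mul, Complex.conj_ofReal]
  have : ((√r : ℝ) : ℂ) * ((√r : ℝ) : ℂ) = r := by
    rw [← Complex.ofReal_mul, Real.mul_self_sqrt hr]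
  linear_combination (w * (starRingEnd ℂ) z) * this

/-- A Hilbert space criterion for a core.  `A` is a closed space of admissible functions, `S` a
space of test functions.  If every pair `(a, b)` orthogonal to the graph of `T` over `S` is
orthogonal to `(u, T u)`, then `u` is a limit of test functions in the graph norm of `T`. -/
lemma exists_graph_approx (m : X → ℝ) (hm : ∀ x, 0 ≤ m x) (A S : Submodule ℂ (X → ℂ))
    (hSA : S ≤ A) (hA : IsClosed (A : Set (X → ℂ)))
    (hA1 : ∀ f ∈ A, (fun x => ((√(m x) : ℝ) : ℂ) * f x) ∈ A)
    (hA2 : ∀ f ∈ A, (fun x => ((√(m x) : ℝ) : ℂ)⁻¹ * f x) ∈ A)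
    (hA0 : ∀ f ∈ A, ∀ x, m x = 0 → f x = 0)
    (T : (X → ℂ) → X → ℂ)
    (hTadd : ∀ f ∈ S, ∀ g ∈ S, T (f + g) = T f + T g)
    (hTsmul : ∀ (c : ℂ), ∀ f ∈ S, T (c • f) = c • T f)
    (hTS : ∀ f ∈ S, T f ∈ A)
    (hS2 : ∀ f ∈ S, Summable fun x => m x * ‖f x‖ ^ 2)
    (hTS2 : ∀ f ∈ S, Summable fun x => m x * ‖T f x‖ ^ 2)
    {u : X → ℂ} (hu : u ∈ A) (hTu : T u ∈ A)
    (hu2 : Summable fun x => m x * ‖u x‖ ^ 2) (hTu2 : Summable fun x => m x * ‖T u x‖ ^ 2)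
    (hsym : ∀ a ∈ A, ∀ b ∈ A, (Summable fun x => m x * ‖a x‖ ^ 2) →
      (Summable fun x => m x * ‖b x‖ ^ 2) →
      (∀ f ∈ S, ∑' x, ((m x : ℝ) : ℂ) * f x * (starRingEnd ℂ) (a x)
        + ∑' x, ((m x : ℝ) : ℂ) * T f x * (starRingEnd ℂ) (b x) = 0) →
      ∑' x, ((m x : ℝ) : ℂ) * u x * (starRingEnd ℂ) (a x)
        + ∑' x, ((m x : ℝ) : ℂ) * T u x * (starRingEnd ℂ) (b x) = 0) :
    ∃ φ : ℕ → X → ℂ, (∀ k, φ k ∈ S) ∧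
      Tendsto (fun k => ∑' x, m x * ‖φ k x - u x‖ ^ 2) atTop (𝓝 0) ∧
      Tendsto (fun k => ∑' x, m x * ‖T (φ k) x - T u x‖ ^ 2) atTop (𝓝 0) := by
  let E := lp (fun _ : X ⊕ X => ℂ) 2
  have hinner : ∀ (f g a b : X → ℂ) (hf : Summable fun x => m x * ‖f x‖ ^ 2)
      (hg : Summable fun x => m x * ‖g x‖ ^ 2) (ha : Summable fun x => m x * ‖a x‖ ^ 2)
      (hb : Summable fun x => m x * ‖b x‖ ^ 2),
      inner ℂ (⟨pairVec m a b, memℓp_pairVec hm ha hb⟩ : E)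
          (⟨pairVec m f g, memℓp_pairVec hm hf hg⟩ : E)
        = ∑' x, ((m x : ℝ) : ℂ) * f x * (starRingEnd ℂ) (a x)
          + ∑' x, ((m x : ℝ) : ℂ) * g x * (starRingEnd ℂ) (b x) := by
    intro f g a b hf hg ha hb
    rw [lp.inner_eq_tsum]
    refine HasSum.tsum_eq (HasSum.sum ?_ ?_)
    · simp only [Function.comp_def, pairVec, Sum.elim_inl, sqrt_inner (hm _)]
      exact (summable_mul_conj hm hf ha).hasSum
    · simp only [Function.comp_def, pairVec, Sum.elim_inr, sqrt_inner (hm _)]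
      exact (summable_mul_conj hm hg hb).hasSum
  let Φ : S →ₗ[ℂ] E :=
    { toFun := fun f => ⟨pairVec m f.1 (T f.1), memℓp_pairVec hm (hS2 _ f.2) (hTS2 _ f.2)⟩
      map_add' := by
        intro f g
        ext x
        rcases x with x | x
        · simp [pairVec, mul_add]
          rfl
        · simp [pairVec, mul_add, hTadd _ f.2 _ g.2]
          rfl
      map_smul' := by
        intro c f
        ext x
        rcases x with x | x
        · simp [pairVec, mul_left_comm]
          rfl
        · simp [pairVec, mul_left_comm, hTsmul c _ f.2]
          rfl }
  let e : E := ⟨pairVec m u (T u), memℓp_pairVec hm hu2 hTu2⟩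
  let K : Submodule ℂ E := Φ.range.topologicalClosure
  have : CompleteSpace K := (Submodule.isClosed_topologicalClosure _).completeSpace_coe
  -- the pairs of admissible functions form a closed subspace containing the graph
  let M : Submodule ℂ E :=
    { carrier := {w | (fun x => w (Sum.inl x)) ∈ A ∧ (fun x => w (Sum.inr x)) ∈ A}
      add_mem' := fun {v w} hv hw => ⟨A.add_mem hv.1 hw.1, A.add_mem hv.2 hw.2⟩
      zero_mem' := ⟨A.zero_mem, A.zero_mem⟩
      smul_mem' := fun c w hw => ⟨A.smul_mem c hw.1, A.smul_mem c hw.2⟩ }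
  have hcont : ∀ z : X ⊕ X, Continuous fun w : E => (w : X ⊕ X → ℂ) z := fun z =>
    (continuous_apply z).comp (lp.uniformContinuous_coe.continuous)
  have hMclosed : IsClosed (M : Set E) :=
    (hA.preimage (continuous_pi fun x => hcont (Sum.inl x))).inter
      (hA.preimage (continuous_pi fun x => hcont (Sum.inr x)))
  have hKM : K ≤ M := by
    refine Submodule.topologicalClosure_minimal _ ?_ hMclosed
    rintro _ ⟨f, rfl⟩
    exact ⟨hA1 _ (hSA f.2), hA1 _ (hTS _ f.2)⟩
  have heM : e ∈ M := ⟨hA1 _ hu, hA1 _ hTu⟩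
  set p : E := K.starProjection e with hp
  have hpK : p ∈ K := K.starProjection_apply_mem e
  set w : E := e - p with hw
  have hwM : w ∈ M := M.sub_mem heM (hKM hpK)
  have hwK : w ∈ Kᗮ := Submodule.sub_starProjection_mem_orthogonal e
  -- undo the weights
  let a : X → ℂ := fun x => ((√(m x) : ℝ) : ℂ)⁻¹ * w (Sum.inl x)
  let b : X → ℂ := fun x => ((√(m x) : ℝ) : ℂ)⁻¹ * w (Sum.inr x)
  have ha : a ∈ A := hA2 _ hwM.1
  have hb : b ∈ A := hA2 _ hwM.2
  have hwa : ∀ x, ((√(m x) : ℝ) : ℂ) * a x = w (Sum.inl x) := by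
    intro x
    by_cases h : m x = 0
    · simp [h, hA0 _ hwM.1 x h]
    · have : ((√(m x) : ℝ) : ℂ) ≠ 0 := by
        exact_mod_cast (Real.sqrt_pos.2 (lt_of_le_of_ne (hm x) (Ne.symm h))).ne'
      exact mul_inv_cancel_left₀ this _
  have hwb : ∀ x, ((√(m x) : ℝ) : ℂ) * b x = w (Sum.inr x) := by
    intro x
    by_cases h : m x = 0
    · simp [h, hA0 _ hwM.2 x h]
    · have : ((√(m x) : ℝ) : ℂ) ≠ 0 := by
        exact_mod_cast (Real.sqrt_pos.2 (lt_of_le_of_ne (hm x) (Ne.symm h))).ne'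
      exact mul_inv_cancel_left₀ this _
  have hwmem : Summable fun z => ‖w z‖ ^ 2 := by
    have := (memℓp_gen_iff (by simp)).1 (lp.memℓp w)
    simpa only [ENNReal.toReal_ofNat, Real.rpow_ofNat] using this
  have ha2 : Summable fun x => m x * ‖a x‖ ^ 2 := by
    have := hwmem.comp_injective Sum.inl_injective
    simpa only [Function.comp_def, ← hwa, norm_sqrt_mul_sq (hm _)] using this
  have hb2 : Summable fun x => m x * ‖b x‖ ^ 2 := by
    have := hwmem.comp_injective Sum.inr_injective
    simpa only [Function.comp_def, ← hwb, norm_sqrt_mul_sq (hm _)] using this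
  have hweq : w = ⟨pairVec m a b, memℓp_pairVec hm ha2 hb2⟩ := by
    ext z
    rcases z with x | x
    · exact (hwa x).symm
    · exact (hwb x).symm
  have hwe : inner ℂ w e = 0 := by
    rw [hweq, hinner u (T u) a b hu2 hTu2 ha2 hb2]
    refine hsym a ha b hb ha2 hb2 fun f hf => ?_
    rw [← hinner f (T f) a b (hS2 f hf) (hTS2 f hf) ha2 hb2, ← hweq]
    refine (Submodule.mem_orthogonal' _ _).1 hwK _ ?_
    exact Submodule.le_topologicalClosure _ ⟨⟨f, hf⟩, rfl⟩
  have hwp : inner ℂ w p = 0 := (Submodule.mem_orthogonal' _ _).1 hwK _ hpK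
  have hw0 : w = 0 := by
    rw [← inner_self_eq_zero (𝕜 := ℂ)]
    nth_rewrite 2 [hw]
    rw [inner_sub_right, hwe, hwp, sub_zero]
  have heK : e ∈ K := by
    have hep : e = p := sub_eq_zero.1 hw0
    rw [hep]
    exact hpK
  obtain ⟨s, hs, hslim⟩ := mem_closure_iff_seq_limit.1
    (show e ∈ closure (Φ.range : Set E) from heK)
  choose f hf using hs
  have hdist : Tendsto (fun k => ‖s k - e‖ ^ 2) atTop (𝓝 0) := by
    have := (tendsto_iff_norm_sub_tendsto_zero.1 hslim).pow 2
    simpa using this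
  have hnorm : ∀ k, HasSum (fun z => ‖(s k - e : E) z‖ ^ 2) (‖s k - e‖ ^ 2) := by
    intro k
    have := lp.hasSum_norm (p := 2) (by simp) (s k - e)
    simpa only [ENNReal.toReal_ofNat, Real.rpow_ofNat] using this
  have hinl : ∀ k x, ‖(s k - e : E) (Sum.inl x)‖ ^ 2 = m x * ‖(f k : X → ℂ) x - u x‖ ^ 2 := by
    intro k x
    rw [← norm_sqrt_mul_sq (hm x), mul_sub, ← hf k]
    rfl
  have hinr : ∀ k x, ‖(s k - e : E) (Sum.inr x)‖ ^ 2
      = m x * ‖T (f k : X → ℂ) x - T u x‖ ^ 2 := by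
    intro k x
    rw [← norm_sqrt_mul_sq (hm x), mul_sub, ← hf k]
    rfl
  refine ⟨fun k => f k, fun k => (f k).2, ?_, ?_⟩
  · refine squeeze_zero (fun k => tsum_nonneg fun x => mul_nonneg (hm x) (sq_nonneg _))
      (fun k => ?_) hdist
    simp only [← hinl]
    rw [← (hnorm k).tsum_eq]
    exact Summable.tsum_le_tsum_of_inj Sum.inl Sum.inl_injective (fun _ _ => sq_nonneg _)
      (fun _ => le_rfl) ((hnorm k).summable.comp_injective Sum.inl_injective) (hnorm k).summable
  · refine squeeze_zero (fun k => tsum_nonneg fun x => mul_nonneg (hm x) (sq_nonneg _))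
      (fun k => ?_) hdist
    simp only [← hinr]
    rw [← (hnorm k).tsum_eq]
    exact Summable.tsum_le_tsum_of_inj Sum.inr Sum.inr_injective (fun _ _ => sq_nonneg _)
      (fun _ => le_rfl) ((hnorm k).summable.comp_injective Sum.inr_injective) (hnorm k).summable

end Approximation

/-! ### Cutoff functions -/

section Cutoff

variable {G : WG V} {n : ℕ}

/-- The oscillation of a vertex function along a tuple of vertices, a permutation invariant
substitute for the squared gradient. -/
noncomputable def osc (χ : V → ℝ) {k : ℕ} (τ : Fin k → V) : ℝ :=
  ∑ a, ∑ b, (χ (τ a) - χ (τ b)) ^ 2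

lemma osc_nonneg (χ : V → ℝ) {k : ℕ} (τ : Fin k → V) : 0 ≤ osc χ τ :=
  Finset.sum_nonneg fun _ _ => Finset.sum_nonneg fun _ _ => sq_nonneg _

lemma osc_perm (χ : V → ℝ) {k : ℕ} (τ : Fin k → V) (σ : Equiv.Perm (Fin k)) :
    osc χ (τ ∘ σ) = osc χ τ := by
  simp only [osc, Function.comp_apply]
  rw [Equiv.sum_comp σ fun a => ∑ b, (χ (τ a) - χ (τ (σ b))) ^ 2]
  exact Finset.sum_congr rfl fun a _ => Equiv.sum_comp σ fun b => (χ (τ a) - χ (τ b)) ^ 2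

lemma sq_le_osc (χ : V → ℝ) {k : ℕ} (τ : Fin k → V) (a b : Fin k) :
    (χ (τ a) - χ (τ b)) ^ 2 ≤ osc χ τ :=
  (Finset.single_le_sum (f := fun b => (χ (τ a) - χ (τ b)) ^ 2) (fun _ _ => sq_nonneg _)
    (Finset.mem_univ b)).trans
  (Finset.single_le_sum (f := fun a => ∑ b, (χ (τ a) - χ (τ b)) ^ 2)
    (fun _ _ => Finset.sum_nonneg fun _ _ => sq_nonneg _) (Finset.mem_univ a))

lemma osc_le (χ : V → ℝ) {k : ℕ} (τ : Fin k → V) {B : ℝ}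
    (h : ∀ a b, (χ (τ a) - χ (τ b)) ^ 2 ≤ B) : osc χ τ ≤ (k : ℝ) ^ 2 * B := by
  calc osc χ τ ≤ ∑ _a : Fin k, ∑ _b : Fin k, B :=
        Finset.sum_le_sum fun a _ => Finset.sum_le_sum fun b _ => h a b
    _ = (k : ℝ) ^ 2 * B := by simp; ring

/-- A sequence of finitely supported functions with values in `[0, 1]`, eventually equal to `1`
at every vertex, whose oscillation energy is uniformly bounded in all degrees.  In odd degrees
the weights themselves are bounded. -/
structure IsCutoff (W : CliqueWeights G n) (χ : ℕ → V → ℝ) (C : ℝ) : Prop where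
  nonneg : ∀ k v, 0 ≤ χ k v
  le_one : ∀ k v, χ k v ≤ 1
  finite_support : ∀ k, (Function.support (χ k)).Finite
  eventually_one : ∀ v, ∀ᶠ k in atTop, χ k v = 1
  pos : 0 < C
  energy : ∀ k j, j + 1 ≤ n → ∀ x : Fin (j + 1) → V,
    ∑' y, W.m (j + 1) (Fin.snoc x y) * osc (χ k) (Fin.snoc x y : Fin (j + 2) → V) ≤ C * W.m j x
  weight_odd : ∀ j, Odd j → j + 1 ≤ n → ∀ x : Fin (j + 1) → V,
    ∑' y, W.m (j + 1) (Fin.snoc x y) ≤ C * W.m j x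

/-- The coboundary of the averaged function is a multiple of an alternating sum of the vertex
values, up to the full sum times the alternating sum of signs. -/
lemma coboundary_avg (χ : V → ℝ) {j : ℕ} (τ : Fin (j + 2) → V) :
    ∑ a : Fin (j + 2), (-1 : ℂ) ^ (a : ℕ) * avg χ (τ ∘ a.succAbove)
      = ((j + 1 : ℕ) : ℂ)⁻¹ * ((∑ a : Fin (j + 2), (-1 : ℂ) ^ (a : ℕ)) * (∑ b, (χ (τ b) : ℂ))
        - ∑ a : Fin (j + 2), (-1 : ℂ) ^ (a : ℕ) * (χ (τ a) : ℂ)) := by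
  have h : ∀ a : Fin (j + 2), avg χ (τ ∘ a.succAbove)
      = ((j + 1 : ℕ) : ℂ)⁻¹ * ((∑ b, (χ (τ b) : ℂ)) - (χ (τ a) : ℂ)) := by
    intro a
    rw [avg, Fin.sum_univ_succAbove (fun b => (χ (τ b) : ℂ)) a, add_sub_cancel_left]
    rfl
  simp only [h]
  rw [Finset.sum_mul, ← Finset.sum_sub_distrib, Finset.mul_sum]
  exact Finset.sum_congr rfl fun a _ => by ring

lemma sum_signs (k : ℕ) : ∑ a : Fin k, (-1 : ℂ) ^ (a : ℕ) = if Even k then 0 else 1 := by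
  rw [Fin.sum_univ_eq_sum_range (fun a => (-1 : ℂ) ^ a) k, neg_one_geom_sum]

/-- The energy bound of a witness of completeness, freed from the division by the weight. -/
lemma energy_of_gradEnergy (W : CliqueWeights G n) {χ : V → ℝ} {C : ℝ} {j : ℕ} (hj : j + 1 ≤ n)
    (hE : ∀ x : Fin (j + 1) → V, IsSimplex G x → gradEnergyOn W Set.univ j χ x ≤ C)
    (x : Fin (j + 1) → V) :
    ∑' y, W.m (j + 1) (Fin.snoc x y) * ‖∑ a : Fin (j + 2), (-1 : ℂ) ^ (a : ℕ) *
      avg χ ((Fin.snoc x y : Fin (j + 2) → V) ∘ a.succAbove)‖ ^ 2 ≤ C * W.m j x := by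
  by_cases hx : IsSimplex G x
  · have hm := (weight_pos_iff W (by omega) x).2 hx
    have h := hE x hx
    rw [gradEnergyOn, inv_mul_le_iff₀ hm, mul_comm] at h
    refine le_trans (le_of_eq (tsum_congr fun y => ?_)) h
    rw [Set.indicator_of_mem (Set.mem_univ y)]
    by_cases hs : IsSimplex G (Fin.snoc x y : Fin (j + 2) → V)
    · have := d_apply (G := G) (fun σ : Fin (j + 1) → V => avg χ σ) hs
      rw [d] at this
      rw [this]
    · rw [weight_eq_zero W hj hs, zero_mul, zero_mul]
  · have hm := weight_eq_zero W (by omega : j ≤ n) hx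
    simp [hm, weight_snoc_eq_zero W hj hm]

lemma alternating_sum_snoc (χ : V → ℝ) {j : ℕ} (hj : Even j) (x : Fin (j + 1) → V) (y : V) :
    ∑ a : Fin (j + 2), (-1 : ℝ) ^ (a : ℕ) * χ ((Fin.snoc x y : Fin (j + 2) → V) a)
      = χ (x 0) + ∑ b : Fin j, (-1 : ℝ) ^ ((b : ℕ) + 1) * χ (x b.succ) - χ y := by
  rw [Fin.sum_univ_castSucc]
  simp only [Fin.snoc_castSucc, Fin.snoc_last, Fin.val_castSucc, Fin.val_last]
  rw [Fin.sum_univ_succ, (hj.add_one).neg_one_pow]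
  simp
  ring

/-- In even degrees the energy controls the differences `χ(x₀) - χ(y)`: reversing all vertices
of `x` but the first one changes the sign of their contribution to the alternating sum. -/
lemma energy_vertex_zero (W : CliqueWeights G n) {χ : V → ℝ} {C : ℝ} {j : ℕ} (hj : j + 1 ≤ n)
    (hev : Even j)
    (hE : ∀ x : Fin (j + 1) → V, IsSimplex G x → gradEnergyOn W Set.univ j χ x ≤ C)
    (x : Fin (j + 1) → V) :
    ∑' y, W.m (j + 1) (Fin.snoc x y) * (χ (x 0) - χ y) ^ 2 ≤ (j + 1) ^ 2 * C * W.m j x := by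
  set F : (Fin (j + 2) → V) → ℝ := fun τ => ∑ a : Fin (j + 2), (-1 : ℝ) ^ (a : ℕ) * χ (τ a)
    with hF
  have hnorm : ∀ τ : Fin (j + 2) → V, ‖∑ a : Fin (j + 2), (-1 : ℂ) ^ (a : ℕ) *
      avg χ (τ ∘ a.succAbove)‖ ^ 2 = ((j + 1 : ℝ) ^ 2)⁻¹ * F τ ^ 2 := by
    intro τ
    have hev2 : Even (j + 2) := hev.add (by decide)
    rw [coboundary_avg, sum_signs, if_pos hev2, zero_mul, zero_sub]
    have : ∑ a : Fin (j + 2), (-1 : ℂ) ^ (a : ℕ) * (χ (τ a) : ℂ) = ((F τ : ℝ) : ℂ) := by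
      simp [hF]
    rw [this, norm_mul, norm_neg, mul_pow, Complex.norm_real, Real.norm_eq_abs, sq_abs, norm_inv,
      Complex.norm_natCast, inv_pow]
    push_cast
    rfl
  have hB : ∀ x : Fin (j + 1) → V,
      ∑' y, W.m (j + 1) (Fin.snoc x y) * F (Fin.snoc x y) ^ 2 ≤ (j + 1) ^ 2 * C * W.m j x := by
    intro x
    have h := energy_of_gradEnergy W hj hE x
    simp only [hnorm] at h
    have hpos : (0 : ℝ) < (j + 1 : ℝ) ^ 2 := by positivity
    have h2 : ∑' y, W.m (j + 1) (Fin.snoc x y) * (((j + 1 : ℝ) ^ 2)⁻¹ * F (Fin.snoc x y) ^ 2)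
        = ((j + 1 : ℝ) ^ 2)⁻¹ * ∑' y, W.m (j + 1) (Fin.snoc x y) * F (Fin.snoc x y) ^ 2 := by
      rw [← tsum_mul_left]
      exact tsum_congr fun y => by ring
    rw [h2, inv_mul_le_iff₀ hpos] at h
    linarith
  set x' : Fin (j + 1) → V := x ∘ extPerm Fin.revPerm with hx'
  have hFF : ∀ y, F (Fin.snoc x y) + F (Fin.snoc x' y) = 2 * (χ (x 0) - χ y) := by
    intro y
    simp only [hF]
    rw [alternating_sum_snoc χ hev, alternating_sum_snoc χ hev]
    have : ∑ b : Fin j, (-1 : ℝ) ^ ((b : ℕ) + 1) * χ (x' b.succ)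
        = - ∑ b : Fin j, (-1 : ℝ) ^ ((b : ℕ) + 1) * χ (x b.succ) := by
      rw [← Equiv.sum_comp Fin.revPerm, ← Finset.sum_neg_distrib]
      refine Finset.sum_congr rfl fun b _ => ?_
      have h1 : x' (Fin.revPerm b).succ = x b.succ := by simp [hx']
      have h2 : (-1 : ℝ) ^ ((Fin.revPerm b : ℕ) + 1) = - (-1 : ℝ) ^ ((b : ℕ) + 1) := by
        have h3 : (Fin.revPerm b : ℕ) + 1 + ((b : ℕ) + 1) = j + 1 := by
          simp [Fin.val_rev]; omega
        have h4 : (-1 : ℝ) ^ ((Fin.revPerm b : ℕ) + 1) * (-1) ^ ((b : ℕ) + 1) = -1 := by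
          rw [← pow_add, h3, hev.add_one.neg_one_pow]
        rcases neg_one_pow_eq_or ℝ ((b : ℕ) + 1) with h5 | h5 <;> rw [h5] at h4 ⊢ <;> linarith
      rw [h1, h2]
      ring
    rw [this]
    have h0 : x' 0 = x 0 := by simp [hx']
    rw [h0]
    ring
  have hw : ∀ y, W.m (j + 1) (Fin.snoc x' y) = W.m (j + 1) (Fin.snoc x y) := by
    intro y
    rw [snoc_eq_cons, snoc_eq_cons, hx', cons_comp_perm, weight_perm W hj, weight_perm W hj,
      weight_perm W hj]
  have h1 := hB x
  have h2 := hB x'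
  rw [hx', weight_perm W (by omega), ← hx'] at h2
  simp only [hw] at h2
  have s1 := summable_snoc_real W hj x fun y => F (Fin.snoc x y) ^ 2
  have s2 := summable_snoc_real W hj x fun y => F (Fin.snoc x' y) ^ 2
  have s3 := summable_snoc_real W hj x fun y => (χ (x 0) - χ y) ^ 2
  have key : ∑' y, W.m (j + 1) (Fin.snoc x y) * (χ (x 0) - χ y) ^ 2
      ≤ ∑' y, (1 / 2) * (W.m (j + 1) (Fin.snoc x y) * F (Fin.snoc x y) ^ 2
        + W.m (j + 1) (Fin.snoc x y) * F (Fin.snoc x' y) ^ 2) := by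
    refine Summable.tsum_le_tsum (fun y => ?_) s3 ((s1.add s2).mul_left _)
    have h := hFF y
    have : (χ (x 0) - χ y) ^ 2 ≤ (1 / 2) * (F (Fin.snoc x y) ^ 2 + F (Fin.snoc x' y) ^ 2) := by
      have h5 : χ (x 0) - χ y = (F (Fin.snoc x y) + F (Fin.snoc x' y)) / 2 := by linarith
      rw [h5]
      nlinarith [sq_nonneg (F (Fin.snoc x y) - F (Fin.snoc x' y))]
    have := mul_le_mul_of_nonneg_left this (W.nonneg (j + 1) (Fin.snoc x y))
    linarith
  rw [tsum_mul_left, s1.tsum_add s2] at key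
  linarith

lemma energy_vertex (W : CliqueWeights G n) {χ : V → ℝ} {C : ℝ} {j : ℕ} (hj : j + 1 ≤ n)
    (hev : Even j)
    (hE : ∀ x : Fin (j + 1) → V, IsSimplex G x → gradEnergyOn W Set.univ j χ x ≤ C)
    (x : Fin (j + 1) → V) (b : Fin (j + 1)) :
    ∑' y, W.m (j + 1) (Fin.snoc x y) * (χ (x b) - χ y) ^ 2 ≤ (j + 1) ^ 2 * C * W.m j x := by
  have h := energy_vertex_zero W hj hev hE (x ∘ Equiv.swap 0 b)
  rw [weight_perm W (by omega)] at h
  refine le_trans (le_of_eq (tsum_congr fun y => ?_)) h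
  rw [snoc_eq_cons y (x ∘ _), cons_comp_perm, weight_perm W hj, weight_perm W hj, snoc_eq_cons,
    weight_perm W hj]
  simp

/-- For odd `j` the alternating sum of the `j + 2` signs is `1`, so the coboundary of the averaged
cutoff equals `1` wherever the cutoff is `1`: the energy bound is a bound on the weights. -/
lemma weight_bound_of_odd (W : CliqueWeights G n) {O : ℕ → Set V} {χ : ℕ → V → ℝ} {C : ℝ}
    (hmono : Monotone O) (hU : (⋃ k, O k) = Set.univ)
    (havg : ∀ k (i : ℕ), i ≤ n → ∀ x : Fin (i + 1) → V, IsSimplex G x →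
      (∀ j, x j ∈ O k) → avg (χ k) x = 1)
    {j : ℕ} (hj : j + 1 ≤ n) (hodd : Odd j)
    (hE : ∀ k, ∀ x : Fin (j + 1) → V, IsSimplex G x → gradEnergyOn W Set.univ j (χ k) x ≤ C)
    (x : Fin (j + 1) → V) :
    ∑' y, W.m (j + 1) (Fin.snoc x y) ≤ C * W.m j x := by
  have hev : ∀ v, ∀ᶠ k in atTop, v ∈ O k := by
    intro v
    obtain ⟨k, hk⟩ := Set.mem_iUnion.1 (hU ▸ Set.mem_univ v)
    exact eventually_atTop.2 ⟨k, fun l hl => hmono hl hk⟩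
  have h1 : ∀ᶠ k in atTop, ∀ a, x a ∈ O k := eventually_all.2 fun a => hev (x a)
  have h2 : ∀ᶠ k in atTop, ∀ y ∈ {y | W.m (j + 1) (Fin.snoc x y) ≠ 0}, y ∈ O k :=
    (eventually_all_finite (finite_snoc W hj x)).2 fun y _ => hev y
  obtain ⟨k, hk1, hk2⟩ := (h1.and h2).exists
  refine le_trans (le_of_eq (tsum_congr fun y => ?_)) (energy_of_gradEnergy W hj (hE k) x)
  by_cases hy : W.m (j + 1) (Fin.snoc x y) = 0
  · rw [hy, zero_mul]
  have hs : IsSimplex G (Fin.snoc x y : Fin (j + 2) → V) :=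
    by_contra fun h => hy (weight_eq_zero W hj h)
  have hO : ∀ a, (Fin.snoc x y : Fin (j + 2) → V) a ∈ O k := by
    intro a
    refine Fin.lastCases ?_ (fun b => ?_) a
    · rw [Fin.snoc_last]; exact hk2 y hy
    · rw [Fin.snoc_castSucc]; exact hk1 b
  have : ∀ a : Fin (j + 2), avg (χ k) ((Fin.snoc x y : Fin (j + 2) → V) ∘ a.succAbove) = 1 :=
    fun a => havg k j (by omega) _ (hs.comp Fin.succAbove_right_injective) fun b => hO _
  simp only [this, mul_one]
  have hodd2 : ¬ Even (j + 2) := Nat.not_even_iff_odd.2 (hodd.add_even (by decide))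
  rw [sum_signs, if_neg hodd2]
  simp

/-- Clamping to `[0, 1]` is a contraction. -/
lemma clamp_sq_le (s t : ℝ) :
    (max 0 (min 1 s) - max 0 (min 1 t)) ^ 2 ≤ (s - t) ^ 2 := by
  rw [sq_le_sq]
  refine (abs_max_sub_max_le_max 0 _ 0 _).trans ?_
  rw [sub_self, abs_zero, max_eq_right (abs_nonneg _)]
  refine (abs_min_sub_min_le_max 1 _ 1 _).trans ?_
  rw [sub_self, abs_zero, max_eq_right (abs_nonneg _)]

lemma exists_isCutoff (W : CliqueWeights G n) (h : GloballyChiComplete W) :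
    ∃ χ C, IsCutoff W χ C := by
  obtain ⟨O, χ₀, -, hmono, -, hU, hsupp, havg, C, hC, hE⟩ := h
  have hE' : ∀ k (j : ℕ), j + 1 ≤ n → ∀ x : Fin (j + 1) → V,
      IsSimplex G x → gradEnergyOn W Set.univ j (χ₀ k) x ≤ C :=
    fun k j hj x hx => hE k j hj x hx fun _ => Set.mem_univ _
  have havg' : ∀ k (i : ℕ), i ≤ n → ∀ x : Fin (i + 1) → V, IsSimplex G x →
      (∀ j, x j ∈ O k) → avg (χ₀ k) x = 1 :=
    fun k i hi x hx hO => havg k i hi x hx (fun _ => Set.mem_univ _) hO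
  set χ : ℕ → V → ℝ := fun k v => max 0 (min 1 (χ₀ k v)) with hχ
  have h0 : ∀ k v, 0 ≤ χ k v := fun k v => le_max_left _ _
  have h1 : ∀ k v, χ k v ≤ 1 := fun k v => max_le zero_le_one (min_le_left _ _)
  have hodd : ∀ j, Odd j → j + 1 ≤ n → ∀ x : Fin (j + 1) → V,
      ∑' y, W.m (j + 1) (Fin.snoc x y) ≤ C * W.m j x := fun j ho hj x =>
    weight_bound_of_odd W hmono hU havg' hj ho (fun k => hE' k j hj) x
  have hn1 : (1 : ℝ) ≤ n + 2 := by linarith [(Nat.cast_nonneg n : (0 : ℝ) ≤ n)]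
  refine ⟨χ, 4 * (n + 2) ^ 5 * C, h0, h1, ?_, ?_, by positivity, ?_, ?_⟩
  · refine fun k => (hsupp k).subset fun v hv hv0 => hv ?_
    simp [hχ, hv0]
  · intro v
    obtain ⟨k, hk⟩ := Set.mem_iUnion.1 (hU ▸ Set.mem_univ v)
    refine eventually_atTop.2 ⟨k, fun l hl => ?_⟩
    have hs : IsSimplex G (fun _ : Fin 1 => v) :=
      (weight_pos_iff W (Nat.zero_le n) _).1 (by rw [W.m_zero]; exact G.m₀_pos _)
    have := havg' l 0 (Nat.zero_le n) (fun _ => v) hs fun _ => hmono hl hk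
    simp only [avg] at this
    have hv : χ₀ l v = 1 := by
      simp at this
      exact_mod_cast this
    simp [hχ, hv]
  · intro k j hj x
    have hjn : (j : ℝ) + 2 ≤ n + 2 := by
      have : (j : ℝ) ≤ n := by exact_mod_cast (by omega : j ≤ n)
      linarith
    rcases Nat.even_or_odd j with hev | ho
    · -- every difference along `(x, y)` is bounded by those with `y`
      have hq : ∀ y, osc (χ k) (Fin.snoc x y : Fin (j + 2) → V)
          ≤ ∑ b : Fin (j + 1), (4 * (j + 2 : ℝ) ^ 2) * (χ₀ k (x b) - χ₀ k y) ^ 2 := by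
        intro y
        set B : ℝ := ∑ b : Fin (j + 1), (χ₀ k (x b) - χ₀ k y) ^ 2 with hB
        have hB0 : 0 ≤ B := Finset.sum_nonneg fun _ _ => sq_nonneg _
        have hb : ∀ a, (χ k ((Fin.snoc x y : Fin (j + 2) → V) a) - χ k y) ^ 2 ≤ B := by
          intro a
          refine Fin.lastCases ?_ (fun b => ?_) a
          · rw [Fin.snoc_last, sub_self]
            simpa using hB0
          · rw [Fin.snoc_castSucc]
            exact (clamp_sq_le _ _).trans (Finset.single_le_sum
              (f := fun b => (χ₀ k (x b) - χ₀ k y) ^ 2) (fun _ _ => sq_nonneg _)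
              (Finset.mem_univ b))
        have := osc_le (χ k) (Fin.snoc x y : Fin (j + 2) → V) (B := 4 * B) fun a b => by
          have h2 := hb a
          have h3 := hb b
          nlinarith [sq_nonneg ((χ k ((Fin.snoc x y : Fin (j + 2) → V) a) - χ k y) +
            (χ k ((Fin.snoc x y : Fin (j + 2) → V) b) - χ k y))]
        rw [← Finset.mul_sum]
        push_cast at this
        linarith
      calc ∑' y, W.m (j + 1) (Fin.snoc x y) * osc (χ k) (Fin.snoc x y : Fin (j + 2) → V)
          ≤ ∑' y, ∑ b : Fin (j + 1), (4 * (j + 2 : ℝ) ^ 2) *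
              (W.m (j + 1) (Fin.snoc x y) * (χ₀ k (x b) - χ₀ k y) ^ 2) := by
            refine Summable.tsum_le_tsum (fun y => ?_) (summable_snoc_real W hj x _)
              (summable_sum fun b _ => (summable_snoc_real W hj x _).mul_left _)
            refine (mul_le_mul_of_nonneg_left (hq y) (W.nonneg _ _)).trans (le_of_eq ?_)
            rw [Finset.mul_sum]
            exact Finset.sum_congr rfl fun b _ => by ring
        _ = ∑ b : Fin (j + 1), (4 * (j + 2 : ℝ) ^ 2) *
              ∑' y, W.m (j + 1) (Fin.snoc x y) * (χ₀ k (x b) - χ₀ k y) ^ 2 := by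
            rw [Summable.tsum_finsetSum fun b _ => (summable_snoc_real W hj x _).mul_left _]
            exact Finset.sum_congr rfl fun b _ => tsum_mul_left
        _ ≤ ∑ _b : Fin (j + 1), (4 * (j + 2 : ℝ) ^ 2) * ((j + 1) ^ 2 * C * W.m j x) :=
            Finset.sum_le_sum fun b _ => mul_le_mul_of_nonneg_left
              (energy_vertex W hj hev (hE' k j hj) x b) (by positivity)
        _ = 4 * ((j + 2) ^ 2 * (j + 1) ^ 3) * (C * W.m j x) := by
            simp
            ring
        _ ≤ 4 * ((n + 2) ^ 2 * (n + 2) ^ 3) * (C * W.m j x) := by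
            have := mul_nonneg hC.le (W.nonneg j x)
            gcongr
            · omega
            · norm_num
        _ = _ := by ring
    · calc ∑' y, W.m (j + 1) (Fin.snoc x y) * osc (χ k) (Fin.snoc x y : Fin (j + 2) → V)
          ≤ ∑' y, W.m (j + 1) (Fin.snoc x y) * (j + 2 : ℝ) ^ 2 := by
            refine Summable.tsum_le_tsum (fun y => ?_) (summable_snoc_real W hj x _)
              (summable_snoc_real W hj x _)
            refine mul_le_mul_of_nonneg_left ?_ (W.nonneg _ _)
            have := osc_le (χ k) (Fin.snoc x y : Fin (j + 2) → V) (B := 1) fun a b => by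
              have := h0 k ((Fin.snoc x y : Fin (j + 2) → V) a)
              have := h1 k ((Fin.snoc x y : Fin (j + 2) → V) a)
              have := h0 k ((Fin.snoc x y : Fin (j + 2) → V) b)
              have := h1 k ((Fin.snoc x y : Fin (j + 2) → V) b)
              rw [sq_le_one_iff_abs_le_one, abs_le]
              constructor <;> linarith
            push_cast at this
            linarith
        _ = (∑' y, W.m (j + 1) (Fin.snoc x y)) * (j + 2 : ℝ) ^ 2 := tsum_mul_right
        _ ≤ (C * W.m j x) * (j + 2 : ℝ) ^ 2 :=
            mul_le_mul_of_nonneg_right (hodd j ho hj x) (by positivity)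
        _ ≤ (C * W.m j x) * (4 * (n + 2) ^ 5) := by
            refine mul_le_mul_of_nonneg_left ?_ (mul_nonneg hC.le (W.nonneg j x))
            calc ((j : ℝ) + 2) ^ 2 ≤ ((n : ℝ) + 2) ^ 2 := by gcongr
              _ ≤ ((n : ℝ) + 2) ^ 5 := pow_le_pow_right₀ hn1 (by norm_num)
              _ ≤ _ := by linarith [pow_nonneg (zero_le_one.trans hn1) 5]
        _ = _ := by ring
  · intro j ho hj x
    refine (hodd j ho hj x).trans (mul_le_mul_of_nonneg_right ?_ (W.nonneg j x))
    have : (1 : ℝ) ≤ (n + 2) ^ 5 := one_le_pow₀ hn1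
    nlinarith

end Cutoff

/-! ### Cutoffs on simplices and commutator estimates -/

section Commutator

variable {G : WG V} {n : ℕ}

/-- The cutoff on tuples induced by a vertex function: its minimum over the vertices. -/
noncomputable def cut (χ : V → ℝ) {i : ℕ} (x : Fin (i + 1) → V) : ℝ :=
  Finset.univ.inf' Finset.univ_nonempty fun a => χ (x a)

/-- Multiplication of a cochain by the cutoff. -/
noncomputable def cutMul (χ : V → ℝ) {i : ℕ} (f : (Fin (i + 1) → V) → ℂ) :
    (Fin (i + 1) → V) → ℂ :=
  fun x => ((cut χ x : ℝ) : ℂ) * f x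

lemma cut_le (χ : V → ℝ) {i : ℕ} (x : Fin (i + 1) → V) (a : Fin (i + 1)) :
    cut χ x ≤ χ (x a) :=
  Finset.inf'_le _ (Finset.mem_univ a)

lemma exists_cut_eq (χ : V → ℝ) {i : ℕ} (x : Fin (i + 1) → V) : ∃ a, cut χ x = χ (x a) := by
  obtain ⟨a, -, h⟩ := Finset.exists_mem_eq_inf' (s := Finset.univ) Finset.univ_nonempty
    fun a => χ (x a)
  exact ⟨a, h⟩

lemma cut_le_face (χ : V → ℝ) {i : ℕ} (τ : Fin (i + 2) → V) (j : Fin (i + 2)) :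
    cut χ τ ≤ cut χ (τ ∘ j.succAbove) := by
  obtain ⟨a, ha⟩ := exists_cut_eq χ (τ ∘ j.succAbove)
  rw [ha]
  exact cut_le χ τ _

lemma cut_perm (χ : V → ℝ) {i : ℕ} (x : Fin (i + 1) → V) (σ : Equiv.Perm (Fin (i + 1))) :
    cut χ (x ∘ σ) = cut χ x := by
  refine le_antisymm ?_ ?_
  · obtain ⟨a, ha⟩ := exists_cut_eq χ x
    rw [ha]
    simpa using cut_le χ (x ∘ σ) (σ.symm a)
  · obtain ⟨a, ha⟩ := exists_cut_eq χ (x ∘ σ)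
    rw [ha]
    exact cut_le χ x _

lemma cut_face_sub_sq_le (χ : V → ℝ) {i : ℕ} (τ : Fin (i + 2) → V) (j : Fin (i + 2)) :
    (cut χ (τ ∘ j.succAbove) - cut χ τ) ^ 2 ≤ osc χ τ := by
  obtain ⟨a, ha⟩ := exists_cut_eq χ (τ ∘ j.succAbove)
  obtain ⟨b, hb⟩ := exists_cut_eq χ τ
  rw [ha, hb]
  exact sq_le_osc χ τ _ _

lemma isCochain_cutMul (χ : V → ℝ) {i : ℕ} {f : (Fin (i + 1) → V) → ℂ} (hf : IsCochain G i f) :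
    IsCochain G i (cutMul χ f) := by
  refine ⟨fun x σ => ?_, fun x hx => ?_⟩
  · rw [cutMul, cutMul, cut_perm, hf.1]
    ring
  · rw [cutMul, hf.2 x hx, mul_zero]

variable {W : CliqueWeights G n} {χ : ℕ → V → ℝ} {C : ℝ}

lemma IsCutoff.cut_nonneg (hχ : IsCutoff W χ C) (k : ℕ) {i : ℕ} (x : Fin (i + 1) → V) :
    0 ≤ cut (χ k) x := by
  obtain ⟨a, ha⟩ := exists_cut_eq (χ k) x
  exact ha ▸ hχ.nonneg k _

lemma IsCutoff.cut_le_one (hχ : IsCutoff W χ C) (k : ℕ) {i : ℕ} (x : Fin (i + 1) → V) :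
    cut (χ k) x ≤ 1 :=
  (cut_le (χ k) x 0).trans (hχ.le_one k _)

lemma IsCutoff.finite_support_cut (hχ : IsCutoff W χ C) (k i : ℕ) :
    (Function.support fun x : Fin (i + 1) → V => cut (χ k) x).Finite := by
  refine (Set.Finite.pi' fun _ : Fin (i + 1) => hχ.finite_support k).subset fun x hx a ha => hx ?_
  exact le_antisymm (ha ▸ cut_le (χ k) x a) (hχ.cut_nonneg k x)

lemma IsCutoff.finite_support_cutMul (hχ : IsCutoff W χ C) (k : ℕ) {i : ℕ}
    (f : (Fin (i + 1) → V) → ℂ) : (Function.support (cutMul (χ k) f)).Finite := by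
  refine (hχ.finite_support_cut k i).subset fun x hx h0 => hx ?_
  simp only at h0
  simp [cutMul, h0]

lemma IsCutoff.eventually_cut (hχ : IsCutoff W χ C) {i : ℕ} (x : Fin (i + 1) → V) :
    ∀ᶠ k in atTop, cut (χ k) x = 1 := by
  filter_upwards [eventually_all.2 fun a => hχ.eventually_one (x a)] with k hk
  obtain ⟨a, ha⟩ := exists_cut_eq (χ k) x
  rw [ha, hk]

lemma IsCutoff.norm_cutMul_le (hχ : IsCutoff W χ C) (k : ℕ) {i : ℕ}
    (f : (Fin (i + 1) → V) → ℂ) (x : Fin (i + 1) → V) : ‖cutMul (χ k) f x‖ ≤ ‖f x‖ := by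
  rw [cutMul, norm_mul, Complex.norm_real, Real.norm_of_nonneg (hχ.cut_nonneg k x)]
  exact mul_le_of_le_one_left (norm_nonneg _) (hχ.cut_le_one k x)

/-- The energy of the cutoff at a simplex. -/
noncomputable def cutEnergy (W : CliqueWeights G n) (χ : V → ℝ) (i : ℕ) (x : Fin (i + 1) → V) : ℝ :=
  ∑' y, W.m (i + 1) (Fin.snoc x y) * osc χ (Fin.snoc x y : Fin (i + 2) → V)

lemma cutEnergy_nonneg (W : CliqueWeights G n) (χ : V → ℝ) (i : ℕ) (x : Fin (i + 1) → V) :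
    0 ≤ cutEnergy W χ i x :=
  tsum_nonneg fun _ => mul_nonneg (W.nonneg _ _) (osc_nonneg _ _)

lemma IsCutoff.eventually_energy (hχ : IsCutoff W χ C) {i : ℕ} (hi : i + 1 ≤ n)
    (x : Fin (i + 1) → V) : ∀ᶠ k in atTop, cutEnergy W (χ k) i x = 0 := by
  have h1 : ∀ᶠ k in atTop, ∀ a, χ k (x a) = 1 := eventually_all.2 fun a => hχ.eventually_one _
  have h2 : ∀ᶠ k in atTop, ∀ y ∈ {y | W.m (i + 1) (Fin.snoc x y) ≠ 0}, χ k y = 1 :=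
    (eventually_all_finite (finite_snoc W hi x)).2 fun y _ => hχ.eventually_one _
  filter_upwards [h1, h2] with k hk1 hk2
  rw [cutEnergy, ← tsum_zero (α := ℝ) (β := V)]
  refine tsum_congr fun y => ?_
  by_cases hy : W.m (i + 1) (Fin.snoc x y) = 0
  · rw [hy, zero_mul]
  have h : ∀ a, χ k ((Fin.snoc x y : Fin (i + 2) → V) a) = 1 := by
    intro a
    refine Fin.lastCases ?_ (fun b => ?_) a
    · rw [Fin.snoc_last]; exact hk2 y hy
    · rw [Fin.snoc_castSucc]; exact hk1 b
  simp [osc, h]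

/-- Summation over the faces opposite to position `j`, for a permutation invariant density. -/
lemma hasSum_face {i : ℕ} {μ : (Fin (i + 2) → V) → ℝ} (hμ : ∀ τ, 0 ≤ μ τ)
    (hperm : ∀ τ (σ : Equiv.Perm (Fin (i + 2))), μ (τ ∘ σ) = μ τ)
    {φ : (Fin (i + 1) → V) → ℝ} (hφ : ∀ x, 0 ≤ φ x)
    (hs : ∀ x, Summable fun y => μ (Fin.snoc x y))
    (hS : Summable fun x => φ x * ∑' y, μ (Fin.snoc x y)) (j : Fin (i + 2)) :
    HasSum (fun τ => μ τ * φ (τ ∘ j.succAbove)) (∑' x, φ x * ∑' y, μ (Fin.snoc x y)) := by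
  have hprod : Summable fun p : (Fin (i + 1) → V) × V => φ p.1 * μ (Fin.snoc p.1 p.2) := by
    have hnn : 0 ≤ fun p : (Fin (i + 1) → V) × V => φ p.1 * μ (Fin.snoc p.1 p.2) :=
      fun p => mul_nonneg (hφ _) (hμ _)
    rw [summable_prod_of_nonneg hnn]
    refine ⟨fun x => (hs x).mul_left (φ x), hS.congr fun x => ?_⟩
    exact tsum_mul_left.symm
  rw [← (faceEquiv V j).hasSum_iff]
  have h2 : ∑' x, φ x * ∑' y, μ (Fin.snoc x y)
      = ∑' p : (Fin (i + 1) → V) × V, φ p.1 * μ (Fin.snoc p.1 p.2) := by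
    rw [hprod.tsum_prod]
    simp only [tsum_mul_left]
  rw [h2]
  refine HasSum.congr_fun hprod.hasSum fun p => ?_
  rw [Function.comp_apply, faceEquiv_comp, faceEquiv_apply, insertNth_eq_cons, snoc_eq_cons,
    hperm, hperm, mul_comm]

/-- Summation over all faces, weighted with the oscillation of the cutoff. -/
lemma IsCutoff.hasSum_osc (hχ : IsCutoff W χ C) {i : ℕ} (hi : i + 1 ≤ n)
    {u : (Fin (i + 1) → V) → ℂ} (hu : MemL2 W i u) (k : ℕ) :
    HasSum (fun τ : Fin (i + 2) → V => W.m (i + 1) τ *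
        (osc (χ k) τ * ∑ j : Fin (i + 2), ‖u (τ ∘ j.succAbove)‖ ^ 2))
      ((i + 2) * ∑' x, ‖u x‖ ^ 2 * cutEnergy W (χ k) i x) := by
  have hS : Summable fun x => ‖u x‖ ^ 2 * cutEnergy W (χ k) i x := by
    refine Summable.of_nonneg_of_le (fun x => mul_nonneg (sq_nonneg _) (cutEnergy_nonneg _ _ _ _))
      (fun x => ?_) (hu.mul_left C)
    refine (mul_le_mul_of_nonneg_left (hχ.energy k i hi x) (sq_nonneg _)).trans (le_of_eq ?_)
    ring
  have h := hasSum_sum (s := Finset.univ) fun (j : Fin (i + 2)) _ =>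
    hasSum_face (μ := fun τ => W.m (i + 1) τ * osc (χ k) τ) (φ := fun x => ‖u x‖ ^ 2)
      (fun τ => mul_nonneg (W.nonneg _ _) (osc_nonneg _ _))
      (fun τ σ => by rw [weight_perm W hi, osc_perm]) (fun x => sq_nonneg _)
      (fun x => summable_snoc_real W hi x _) hS j
  convert h using 1
  · funext τ
    rw [Finset.mul_sum, Finset.mul_sum]
    exact Finset.sum_congr rfl fun j _ => by ring
  · simp [cutEnergy]

lemma IsCutoff.tsum_energy_le (hχ : IsCutoff W χ C) {i : ℕ} (hi : i + 1 ≤ n)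
    {u : (Fin (i + 1) → V) → ℂ} (hu : MemL2 W i u) (k : ℕ) :
    ∑' x, ‖u x‖ ^ 2 * cutEnergy W (χ k) i x ≤ C * ∑' x, W.m i x * ‖u x‖ ^ 2 := by
  rw [← tsum_mul_left]
  have hle : ∀ x, ‖u x‖ ^ 2 * cutEnergy W (χ k) i x ≤ C * (W.m i x * ‖u x‖ ^ 2) := fun x =>
    (mul_le_mul_of_nonneg_left (hχ.energy k i hi x) (sq_nonneg _)).trans (le_of_eq (by ring))
  exact Summable.tsum_le_tsum hle (Summable.of_nonneg_of_le
    (fun x => mul_nonneg (sq_nonneg _) (cutEnergy_nonneg _ _ _ _)) hle (hu.mul_left C))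
    (hu.mul_left C)

lemma IsCutoff.tendsto_energy (hχ : IsCutoff W χ C) {i : ℕ} (hi : i + 1 ≤ n)
    {u : (Fin (i + 1) → V) → ℂ} (hu : MemL2 W i u) :
    Tendsto (fun k => ∑' x, ‖u x‖ ^ 2 * cutEnergy W (χ k) i x) atTop (𝓝 0) := by
  rw [← tsum_zero (α := ℝ) (β := Fin (i + 1) → V)]
  refine tendsto_tsum_of_dominated_convergence (hu.mul_left C) (fun x => ?_)
    (Eventually.of_forall fun k x => ?_)
  · refine tendsto_const_nhds.congr' ?_
    filter_upwards [hχ.eventually_energy hi x] with k hk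
    rw [hk, mul_zero]
  · rw [Real.norm_of_nonneg (mul_nonneg (sq_nonneg _) (cutEnergy_nonneg _ _ _ _))]
    exact (mul_le_mul_of_nonneg_left (hχ.energy k i hi x) (sq_nonneg _)).trans
      (le_of_eq (by ring))

/-- A sequence of elements of `ℓ²(m_i)` tending to `0`. -/
def NullL2 (W : CliqueWeights G n) (i : ℕ) (F : ℕ → (Fin (i + 1) → V) → ℂ) : Prop :=
  (∀ k, MemL2 W i (F k)) ∧ Tendsto (fun k => ∑' x, W.m i x * ‖F k x‖ ^ 2) atTop (𝓝 0)

lemma sq_add_le (a b : ℂ) : ‖a + b‖ ^ 2 ≤ 2 * ‖a‖ ^ 2 + 2 * ‖b‖ ^ 2 := by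
  have h := norm_add_le a b
  have h2 := pow_le_pow_left₀ (norm_nonneg _) h 2
  nlinarith [sq_nonneg (‖a‖ - ‖b‖)]

lemma MemL2.add {i : ℕ} {f g : (Fin (i + 1) → V) → ℂ} (hf : MemL2 W i f) (hg : MemL2 W i g) :
    MemL2 W i (fun x => f x + g x) := by
  refine Summable.of_nonneg_of_le (fun x => mul_nonneg (W.nonneg _ _) (sq_nonneg _)) (fun x => ?_)
    ((hf.mul_left 2).add (hg.mul_left 2))
  nlinarith [mul_le_mul_of_nonneg_left (sq_add_le (f x) (g x)) (W.nonneg i x)]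

lemma MemL2.neg {i : ℕ} {f : (Fin (i + 1) → V) → ℂ} (hf : MemL2 W i f) :
    MemL2 W i (fun x => - f x) := by
  simpa only [MemL2, norm_neg] using hf

lemma MemL2.of_finite {i : ℕ} {f : (Fin (i + 1) → V) → ℂ} (hf : (Function.support f).Finite) :
    MemL2 W i f := by
  refine summable_of_hasFiniteSupport (hf.subset fun x hx h0 => hx ?_)
  simp [h0]

lemma NullL2.of_le {i : ℕ} {F : ℕ → (Fin (i + 1) → V) → ℂ}
    {B : ℕ → (Fin (i + 1) → V) → ℝ} (hB : ∀ k, Summable (B k))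
    (hle : ∀ k x, W.m i x * ‖F k x‖ ^ 2 ≤ B k x)
    (hlim : Tendsto (fun k => ∑' x, B k x) atTop (𝓝 0)) : NullL2 W i F := by
  have hs : ∀ k, MemL2 W i (F k) := fun k => Summable.of_nonneg_of_le
    (fun x => mul_nonneg (W.nonneg _ _) (sq_nonneg _)) (hle k) (hB k)
  exact ⟨hs, squeeze_zero (fun k => tsum_nonneg fun x => mul_nonneg (W.nonneg _ _) (sq_nonneg _))
    (fun k => Summable.tsum_le_tsum (hle k) (hs k) (hB k)) hlim⟩

lemma NullL2.of_dominated {i : ℕ} {F : ℕ → (Fin (i + 1) → V) → ℂ}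
    {B : (Fin (i + 1) → V) → ℝ} (hB : Summable B)
    (hle : ∀ k x, W.m i x * ‖F k x‖ ^ 2 ≤ B x)
    (hlim : ∀ x, ∀ᶠ k in atTop, W.m i x * ‖F k x‖ ^ 2 = 0) : NullL2 W i F := by
  refine ⟨fun k => Summable.of_nonneg_of_le
    (fun x => mul_nonneg (W.nonneg _ _) (sq_nonneg _)) (hle k) hB, ?_⟩
  rw [← tsum_zero (α := ℝ) (β := Fin (i + 1) → V)]
  refine tendsto_tsum_of_dominated_convergence hB (fun x => ?_)
    (Eventually.of_forall fun k x => ?_)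
  · refine tendsto_const_nhds.congr' ?_
    filter_upwards [hlim x] with k hk
    rw [hk]
  · rw [Real.norm_of_nonneg (mul_nonneg (W.nonneg _ _) (sq_nonneg _))]
    exact hle k x

lemma NullL2.add {i : ℕ} {F F' : ℕ → (Fin (i + 1) → V) → ℂ} (hF : NullL2 W i F)
    (hF' : NullL2 W i F') : NullL2 W i (fun k x => F k x + F' k x) := by
  refine NullL2.of_le (B := fun k x => 2 * (W.m i x * ‖F k x‖ ^ 2) + 2 * (W.m i x * ‖F' k x‖ ^ 2))
    (fun k => ((hF.1 k).mul_left 2).add ((hF'.1 k).mul_left 2)) (fun k x => ?_) ?_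
  · nlinarith [mul_le_mul_of_nonneg_left (sq_add_le (F k x) (F' k x)) (W.nonneg i x)]
  · have h : ∀ k, ∑' x, (2 * (W.m i x * ‖F k x‖ ^ 2) + 2 * (W.m i x * ‖F' k x‖ ^ 2))
        = 2 * ∑' x, W.m i x * ‖F k x‖ ^ 2 + 2 * ∑' x, W.m i x * ‖F' k x‖ ^ 2 := fun k => by
      rw [((hF.1 k).mul_left 2).tsum_add ((hF'.1 k).mul_left 2), tsum_mul_left, tsum_mul_left]
    simp only [h]
    simpa using (hF.2.const_mul 2).add (hF'.2.const_mul 2)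

lemma NullL2.zero (W : CliqueWeights G n) (i : ℕ) : NullL2 W i fun _ _ => 0 :=
  NullL2.of_dominated (B := fun _ => 0) summable_zero (by simp) (by simp)

/-- Cutting off approximates in `ℓ²`. -/
lemma IsCutoff.null_cutMul_sub (hχ : IsCutoff W χ C) {i : ℕ} {f : (Fin (i + 1) → V) → ℂ}
    (hf : MemL2 W i f) : NullL2 W i (fun k x => cutMul (χ k) f x - f x) := by
  refine NullL2.of_dominated (hf.mul_left 4) (fun k x => ?_) fun x => ?_
  · have h : ‖cutMul (χ k) f x - f x‖ ≤ 2 * ‖f x‖ := by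
      have := norm_sub_le (cutMul (χ k) f x) (f x)
      linarith [hχ.norm_cutMul_le k f x]
    have h2 := pow_le_pow_left₀ (norm_nonneg _) h 2
    nlinarith [mul_le_mul_of_nonneg_left h2 (W.nonneg i x)]
  · filter_upwards [hχ.eventually_cut x] with k hk
    simp [cutMul, hk]

/-- The commutator of `d` with a cutoff is a zeroth order term. -/
lemma norm_d_comm_le {i : ℕ} {θ : (Fin (i + 1) → V) → ℝ} {θ' : (Fin (i + 2) → V) → ℝ}
    (u : (Fin (i + 1) → V) → ℂ) {τ : Fin (i + 2) → V} (hτ : IsSimplex G τ) :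
    ‖d G i (fun x => (θ x : ℂ) * u x) τ - (θ' τ : ℂ) * d G i u τ‖
      ≤ ∑ j : Fin (i + 2), |θ (τ ∘ j.succAbove) - θ' τ| * ‖u (τ ∘ j.succAbove)‖ := by
  rw [d_apply _ hτ, d_apply _ hτ, Finset.mul_sum, ← Finset.sum_sub_distrib]
  refine (norm_sum_le _ _).trans (Finset.sum_le_sum fun j _ => le_of_eq ?_)
  rw [show (-1 : ℂ) ^ (j : ℕ) * (θ (τ ∘ j.succAbove) * u (τ ∘ j.succAbove))
      - θ' τ * ((-1) ^ (j : ℕ) * u (τ ∘ j.succAbove))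
      = (-1 : ℂ) ^ (j : ℕ) * (((θ (τ ∘ j.succAbove) - θ' τ : ℝ) : ℂ) * u (τ ∘ j.succAbove)) by
    push_cast; ring]
  rw [norm_mul, norm_pow, norm_neg, norm_one, one_pow, one_mul, norm_mul, Complex.norm_real,
    Real.norm_eq_abs]

lemma IsCutoff.null_d_comm (hχ : IsCutoff W χ C) {i : ℕ} (hi : i + 1 ≤ n)
    {u : (Fin (i + 1) → V) → ℂ} (hu : MemL2 W i u) :
    NullL2 W (i + 1) (fun k τ => d G i (cutMul (χ k) u) τ - cutMul (χ k) (d G i u) τ) := by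
  refine NullL2.of_le (fun k => (hχ.hasSum_osc hi hu k).summable.mul_left ((i : ℝ) + 2))
    (fun k τ => ?_) ?_
  · by_cases hτ : IsSimplex G τ
    swap
    · rw [weight_eq_zero W hi hτ]; simp
    rw [mul_left_comm]
    refine mul_le_mul_of_nonneg_left ?_ (W.nonneg _ _)
    have h1 := pow_le_pow_left₀ (norm_nonneg _)
      (norm_d_comm_le (θ := cut (χ k)) (θ' := cut (χ k)) u hτ) 2
    refine h1.trans (sq_sum_le_card_mul_sum_sq.trans ?_)
    rw [Finset.card_univ, Fintype.card_fin]
    push_cast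
    refine mul_le_mul_of_nonneg_left ?_ (by positivity)
    rw [Finset.mul_sum]
    refine Finset.sum_le_sum fun j _ => ?_
    rw [mul_pow, sq_abs]
    exact mul_le_mul_of_nonneg_right (cut_face_sub_sq_le _ _ _) (sq_nonneg _)
  · refine Tendsto.congr
      (fun k => ((hχ.hasSum_osc hi hu k).mul_left ((i : ℝ) + 2)).tsum_eq.symm) ?_
    simpa using ((hχ.tendsto_energy hi hu).const_mul ((i : ℝ) + 2)).const_mul ((i : ℝ) + 2)

/-- Cauchy–Schwarz for the sum defining the codifferential. -/
lemma norm_sum_snoc_sq_le (W : CliqueWeights G n) {i : ℕ} (hi : i + 1 ≤ n)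
    (x : Fin (i + 1) → V) (θ : V → ℝ) (z : V → ℂ) :
    ‖∑' y, ((W.m (i + 1) (Fin.snoc x y) : ℝ) : ℂ) * ((θ y : ℂ) * z y)‖ ^ 2
      ≤ (∑' y, W.m (i + 1) (Fin.snoc x y) * θ y ^ 2) *
        ∑' y, W.m (i + 1) (Fin.snoc x y) * ‖z y‖ ^ 2 := by
  have hs := finite_snoc W hi x
  have h0 : ∀ y ∉ hs.toFinset, W.m (i + 1) (Fin.snoc x y) = 0 := fun y hy => by
    simpa using hy
  rw [tsum_eq_sum (s := hs.toFinset) fun y hy => by rw [h0 y hy]; simp,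
    tsum_eq_sum (s := hs.toFinset) fun y hy => by rw [h0 y hy]; simp,
    tsum_eq_sum (s := hs.toFinset) fun y hy => by rw [h0 y hy]; simp]
  refine (pow_le_pow_left₀ (norm_nonneg _) (norm_sum_le _ _) 2).trans
    (Finset.sum_sq_le_sum_mul_sum_of_sq_le_mul _
      (fun y _ => mul_nonneg (W.nonneg _ _) (sq_nonneg _))
      (fun y _ => mul_nonneg (W.nonneg _ _) (sq_nonneg _)) fun y _ => le_of_eq ?_)
  rw [norm_mul, norm_mul, Complex.norm_real, Complex.norm_real, Real.norm_eq_abs,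
    Real.norm_eq_abs, mul_pow, mul_pow, sq_abs, sq_abs]
  ring

/-- The mass of `v` over the cofaces of a simplex. -/
noncomputable def cofaceMass (W : CliqueWeights G n) {i : ℕ} (v : (Fin (i + 2) → V) → ℂ)
    (x : Fin (i + 1) → V) : ℝ :=
  ∑' y, W.m (i + 1) (Fin.snoc x y) * ‖v (Fin.snoc x y)‖ ^ 2

lemma cofaceMass_nonneg (W : CliqueWeights G n) {i : ℕ} (v : (Fin (i + 2) → V) → ℂ)
    (x : Fin (i + 1) → V) : 0 ≤ cofaceMass W v x :=
  tsum_nonneg fun _ => mul_nonneg (W.nonneg _ _) (sq_nonneg _)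

lemma summable_cofaceMass {i : ℕ} {v : (Fin (i + 2) → V) → ℂ} (hv : MemL2 W (i + 1) v) :
    Summable (cofaceMass W v) := by
  have h := (faceEquiv V (Fin.last (i + 1))).summable_iff.2 hv
  have h2 := ((summable_prod_of_nonneg (fun p => mul_nonneg (W.nonneg _ _) (sq_nonneg _))).1 h).2
  refine h2.congr fun x => tsum_congr fun y => ?_
  simp [faceEquiv_apply, Fin.insertNth_last']

/-- A codifferential with coefficients whose energy is at most `B m_i`. -/
lemma weight_mul_norm_sq_le (W : CliqueWeights G n) {i : ℕ} (hi : i + 1 ≤ n)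
    (x : Fin (i + 1) → V) (θ : V → ℝ) (v : (Fin (i + 2) → V) → ℂ) {B : ℝ}
    (hB : ∑' y, W.m (i + 1) (Fin.snoc x y) * θ y ^ 2 ≤ B * W.m i x) {w : ℂ}
    (hw : ((W.m i x : ℝ) : ℂ) * w =
      ∑' y, ((W.m (i + 1) (Fin.snoc x y) : ℝ) : ℂ) * ((θ y : ℂ) * v (Fin.snoc x y))) :
    W.m i x * ‖w‖ ^ 2 ≤ B * cofaceMass W v x := by
  by_cases h0 : W.m i x = 0
  · have : cofaceMass W v x = 0 := by
      rw [cofaceMass, ← tsum_zero (α := ℝ) (β := V)]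
      exact tsum_congr fun y => by rw [weight_snoc_eq_zero W hi h0, zero_mul]
    rw [h0, this]; simp
  have hpos : 0 < W.m i x := lt_of_le_of_ne (W.nonneg _ _) (Ne.symm h0)
  have h := norm_sum_snoc_sq_le W hi x θ fun y => v (Fin.snoc x y)
  rw [← hw, norm_mul, Complex.norm_real, Real.norm_of_nonneg hpos.le, mul_pow] at h
  have h2 := h.trans (mul_le_mul_of_nonneg_right hB (cofaceMass_nonneg W v x))
  change _ ≤ _ * cofaceMass W v x at h2
  refine le_of_mul_le_mul_left ?_ hpos
  nlinarith

lemma weight_mul_delta_comm (W : CliqueWeights G n) {i : ℕ} (hi : i + 1 ≤ n) (χ : V → ℝ)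
    (v : (Fin (i + 2) → V) → ℂ) (x : Fin (i + 1) → V) :
    ((W.m i x : ℝ) : ℂ) * (delta G W i (cutMul χ v) x - cutMul χ (delta G W i v) x)
      = ∑' y, ((W.m (i + 1) (Fin.snoc x y) : ℝ) : ℂ) *
        (((cut χ (Fin.snoc x y : Fin (i + 2) → V) - cut χ x : ℝ) : ℂ) * v (Fin.snoc x y)) := by
  rw [mul_sub, weight_mul_delta W hi, cutMul, mul_left_comm, weight_mul_delta W hi,
    ← tsum_mul_left, ← Summable.tsum_sub (summable_snoc W hi x _)
      ((summable_snoc W hi x _).mul_left _)]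
  refine tsum_congr fun y => ?_
  simp only [cutMul]
  push_cast
  ring

lemma cut_snoc_sub_sq_le (χ : V → ℝ) {i : ℕ} (x : Fin (i + 1) → V) (y : V) :
    (cut χ (Fin.snoc x y : Fin (i + 2) → V) - cut χ x) ^ 2
      ≤ osc χ (Fin.snoc x y : Fin (i + 2) → V) := by
  have h := cut_face_sub_sq_le χ (Fin.snoc x y : Fin (i + 2) → V) (Fin.last (i + 1))
  have hx : (Fin.snoc x y : Fin (i + 2) → V) ∘ (Fin.last (i + 1)).succAbove = x := by
    funext a
    simp [Fin.succAbove_last]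
  rw [hx] at h
  linarith [sub_sq_comm (cut χ x) (cut χ (Fin.snoc x y : Fin (i + 2) → V))]

lemma IsCutoff.null_delta_comm (hχ : IsCutoff W χ C) {i : ℕ} (hi : i + 1 ≤ n)
    {v : (Fin (i + 2) → V) → ℂ} (hv : MemL2 W (i + 1) v) :
    NullL2 W i (fun k x => delta G W i (cutMul (χ k) v) x - cutMul (χ k) (delta G W i v) x) := by
  have hle : ∀ k x, ∑' y, W.m (i + 1) (Fin.snoc x y) *
      (cut (χ k) (Fin.snoc x y : Fin (i + 2) → V) - cut (χ k) x) ^ 2 ≤ cutEnergy W (χ k) i x :=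
    fun k x => Summable.tsum_le_tsum
      (fun y => mul_le_mul_of_nonneg_left (cut_snoc_sub_sq_le _ _ _) (W.nonneg _ _))
      (summable_snoc_real W hi x _) (summable_snoc_real W hi x _)
  refine NullL2.of_dominated ((summable_cofaceMass hv).mul_left C) (fun k x => ?_) fun x => ?_
  · exact weight_mul_norm_sq_le W hi x _ v ((hle k x).trans (hχ.energy k i hi x))
      (weight_mul_delta_comm W hi (χ k) v x)
  · filter_upwards [hχ.eventually_energy hi x] with k hk
    refine le_antisymm ?_ (mul_nonneg (W.nonneg _ _) (sq_nonneg _))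
    have := weight_mul_norm_sq_le W hi x _ v (B := 0)
      ((hle k x).trans (by rw [hk, zero_mul])) (weight_mul_delta_comm W hi (χ k) v x)
    simpa using this

/-- `d` is bounded on `ℓ²` in odd degrees. -/
lemma IsCutoff.memL2_d_of_odd (hχ : IsCutoff W χ C) {i : ℕ} (hi : i + 1 ≤ n) (ho : Odd i)
    {u : (Fin (i + 1) → V) → ℂ} (hu : MemL2 W i u) : MemL2 W (i + 1) (d G i u) := by
  have hS : Summable fun x => ‖u x‖ ^ 2 * ∑' y, W.m (i + 1) (Fin.snoc x y) := by
    refine Summable.of_nonneg_of_le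
      (fun x => mul_nonneg (sq_nonneg _) (tsum_nonneg fun y => W.nonneg _ _))
      (fun x => ?_) (hu.mul_left C)
    exact (mul_le_mul_of_nonneg_left (hχ.weight_odd i ho hi x) (sq_nonneg _)).trans
      (le_of_eq (by ring))
  have h := summable_sum (s := Finset.univ) fun (j : Fin (i + 2)) _ =>
    (hasSum_face (μ := W.m (i + 1)) (φ := fun x => ‖u x‖ ^ 2) (W.nonneg _)
      (weight_perm W hi) (fun x => sq_nonneg _)
      (fun x => by simpa using summable_snoc_real W hi x fun _ => 1) hS j).summable
  refine Summable.of_nonneg_of_le (fun x => mul_nonneg (W.nonneg _ _) (sq_nonneg _)) (fun τ => ?_)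
    (h.mul_left ((i : ℝ) + 2))
  by_cases hτ : IsSimplex G τ
  swap
  · rw [weight_eq_zero W hi hτ]; simp
  rw [← Finset.mul_sum, mul_left_comm]
  refine mul_le_mul_of_nonneg_left ?_ (W.nonneg _ _)
  have h1 := pow_le_pow_left₀ (norm_nonneg _)
    (norm_d_comm_le (θ := fun _ => 1) (θ' := fun _ => 0) u hτ) 2
  simp only [Complex.ofReal_one, one_mul, Complex.ofReal_zero, zero_mul, sub_zero, abs_one] at h1
  refine h1.trans (sq_sum_le_card_mul_sum_sq.trans (le_of_eq ?_))
  simp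

/-- `delta` is bounded on `ℓ²` into odd degrees. -/
lemma IsCutoff.memL2_delta_of_odd (hχ : IsCutoff W χ C) {i : ℕ} (hi : i + 1 ≤ n) (ho : Odd i)
    {v : (Fin (i + 2) → V) → ℂ} (hv : MemL2 W (i + 1) v) : MemL2 W i (delta G W i v) := by
  refine Summable.of_nonneg_of_le (fun x => mul_nonneg (W.nonneg _ _) (sq_nonneg _)) (fun x => ?_)
    ((summable_cofaceMass hv).mul_left C)
  refine weight_mul_norm_sq_le W hi x (fun _ => 1) v ?_ ?_
  · simpa using hχ.weight_odd i ho hi x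
  · simpa using weight_mul_delta W hi v x

end Commutator

/-! ### Regularity of the maximal domain of the Laplacian -/

section Regularity

variable {G : WG V} {n : ℕ} {W : CliqueWeights G n} {χ : ℕ → V → ℝ} {C : ℝ}

lemma IsCutoff.memL2_of_bound (hχ : IsCutoff W χ C) {i : ℕ} {f : (Fin (i + 1) → V) → ℂ} {B : ℝ}
    (h : ∀ k, ∑' x, W.m i x * ‖cutMul (χ k) f x‖ ^ 2 ≤ B) : MemL2 W i f := by
  refine summable_of_sum_le (c := B) (fun x => mul_nonneg (W.nonneg _ _) (sq_nonneg _))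
    fun s => ?_
  have hev : ∀ᶠ k in atTop, ∀ x ∈ s, cut (χ k) x = 1 :=
    (Filter.eventually_all_finset s).2 fun x _ => hχ.eventually_cut x
  obtain ⟨k, hk⟩ := hev.exists
  refine le_trans (le_of_eq (Finset.sum_congr rfl fun x hx => ?_))
    ((Summable.sum_le_tsum s (fun x _ => mul_nonneg (W.nonneg i x)
      (sq_nonneg ‖cutMul (χ k) f x‖)) (MemL2.of_finite (hχ.finite_support_cutMul k f))).trans (h k))
  simp [cutMul, hk x hx]

lemma norm_ip_term (W : CliqueWeights G n) {i : ℕ} (f g : (Fin (i + 1) → V) → ℂ)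
    (x : Fin (i + 1) → V) :
    ‖((W.m i x : ℝ) : ℂ) * f x * (starRingEnd ℂ) (g x)‖ = W.m i x * (‖f x‖ * ‖g x‖) := by
  rw [norm_mul, norm_mul, RCLike.norm_conj, Complex.norm_real, Real.norm_of_nonneg (W.nonneg i x),
    mul_assoc]

/-- A weighted form of the Cauchy–Schwarz inequality. -/
lemma norm_ip_le {i : ℕ} {f g : (Fin (i + 1) → V) → ℂ} (hf : MemL2 W i f) (hg : MemL2 W i g)
    {ε : ℝ} (hε : 0 < ε) :
    ‖ip W i f g‖ ≤ ε⁻¹ * ∑' x, W.m i x * ‖f x‖ ^ 2 + ε * ∑' x, W.m i x * ‖g x‖ ^ 2 := by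
  have h := tsum_of_norm_bounded ((hf.mul_left ε⁻¹).add (hg.mul_left ε)).hasSum
    (f := fun x => ((W.m i x : ℝ) : ℂ) * f x * (starRingEnd ℂ) (g x)) fun x => by
      rw [norm_ip_term]
      have h1 : ‖f x‖ * ‖g x‖ ≤ ε⁻¹ * ‖f x‖ ^ 2 + ε * ‖g x‖ ^ 2 := by
        have h2 : 0 ≤ ε⁻¹ * (‖f x‖ - ε * ‖g x‖) ^ 2 := by positivity
        have h3 : ε⁻¹ * (‖f x‖ - ε * ‖g x‖) ^ 2
            = ε⁻¹ * ‖f x‖ ^ 2 + ε * ‖g x‖ ^ 2 - 2 * (‖f x‖ * ‖g x‖) := by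
          field_simp
          ring
        nlinarith [mul_nonneg (norm_nonneg (f x)) (norm_nonneg (g x))]
      calc W.m i x * (‖f x‖ * ‖g x‖) ≤ W.m i x * (ε⁻¹ * ‖f x‖ ^ 2 + ε * ‖g x‖ ^ 2) :=
            mul_le_mul_of_nonneg_left h1 (W.nonneg i x)
        _ = _ := by ring
  rwa [(hf.mul_left ε⁻¹).tsum_add (hg.mul_left ε), tsum_mul_left, tsum_mul_left] at h

lemma NullL2.tendsto_ip {i : ℕ} {F : ℕ → (Fin (i + 1) → V) → ℂ} (hF : NullL2 W i F)
    {g : (Fin (i + 1) → V) → ℂ} (hg : MemL2 W i g) :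
    Tendsto (fun k => ip W i (F k) g) atTop (𝓝 0) := by
  rw [Metric.tendsto_nhds]
  intro η hη
  set M : ℝ := ∑' x, W.m i x * ‖g x‖ ^ 2 with hM
  have hM0 : 0 ≤ M := tsum_nonneg fun x => mul_nonneg (W.nonneg _ _) (sq_nonneg _)
  set ε : ℝ := η / (2 * (M + 1)) with hε
  have hε0 : 0 < ε := by positivity
  have hεM : ε * M < η / 2 := by
    rw [hε, div_mul_eq_mul_div, div_lt_div_iff₀ (by positivity) (by norm_num)]
    nlinarith
  have hlim : Tendsto (fun k => ε⁻¹ * ∑' x, W.m i x * ‖F k x‖ ^ 2) atTop (𝓝 0) := by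
    simpa using hF.2.const_mul ε⁻¹
  filter_upwards [hlim.eventually (gt_mem_nhds (half_pos hη))] with k hk
  rw [dist_zero_right]
  linarith [norm_ip_le (hF.1 k) hg hε0]

lemma tendsto_ip_of_null {i : ℕ} {F : ℕ → (Fin (i + 1) → V) → ℂ} {f g : (Fin (i + 1) → V) → ℂ}
    (hF : NullL2 W i fun k x => F k x - f x) (hf : MemL2 W i f) (hg : MemL2 W i g) :
    Tendsto (fun k => ip W i (F k) g) atTop (𝓝 (ip W i f g)) := by
  have h := (hF.tendsto_ip hg).add_const (ip W i f g)
  rw [zero_add] at h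
  refine h.congr fun k => ?_
  rw [ip, ip, ← (summable_mul_conj (W.nonneg i) (hF.1 k) hg).tsum_add
    (summable_mul_conj (W.nonneg i) hf hg), ip]
  exact tsum_congr fun x => by ring

lemma IsCutoff.null_d_sub (hχ : IsCutoff W χ C) {i : ℕ} (hi : i + 1 ≤ n)
    {u : (Fin (i + 1) → V) → ℂ} (hu : MemL2 W i u) (hdu : MemL2 W (i + 1) (d G i u)) :
    NullL2 W (i + 1) (fun k x => d G i (cutMul (χ k) u) x - d G i u x) := by
  have := (hχ.null_d_comm hi hu).add (hχ.null_cutMul_sub hdu)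
  simpa only [sub_add_sub_cancel] using this

/-- Green's formula on the maximal domains of `d` and `delta`. -/
lemma IsCutoff.green (hχ : IsCutoff W χ C) {i : ℕ} (hi : i + 1 ≤ n)
    {u : (Fin (i + 1) → V) → ℂ} {v : (Fin (i + 2) → V) → ℂ} (hvc : IsAlternating v)
    (hu : MemL2 W i u) (hdu : MemL2 W (i + 1) (d G i u))
    (hv : MemL2 W (i + 1) v) (hδv : MemL2 W i (delta G W i v)) :
    ip W (i + 1) (d G i u) v = greenConst i * ip W i u (delta G W i v) := by
  refine tendsto_nhds_unique (tendsto_ip_of_null (hχ.null_d_sub hi hu hdu) hdu hv) ?_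
  refine Tendsto.congr (fun k => (green_left W hi (hχ.finite_support_cutMul k u) hvc).symm) ?_
  exact (tendsto_ip_of_null (hχ.null_cutMul_sub hu) hu hδv).const_mul _

lemma sq_sum_face_le {i : ℕ} (u : (Fin (i + 1) → V) → ℂ) (τ : Fin (i + 2) → V) :
    (∑ j : Fin (i + 2), ‖u (τ ∘ j.succAbove)‖) ^ 2
      ≤ (i + 2) * ∑ j : Fin (i + 2), ‖u (τ ∘ j.succAbove)‖ ^ 2 := by
  refine sq_sum_le_card_mul_sum_sq.trans (le_of_eq ?_)
  simp

lemma summable_finite_weight {i : ℕ} {f g : (Fin (i + 1) → V) → ℂ}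
    (hf : (Function.support f).Finite) :
    Summable fun x => ((W.m i x : ℝ) : ℂ) * f x * (starRingEnd ℂ) (g x) := by
  refine summable_of_hasFiniteSupport (hf.subset fun x hx h0 => hx ?_)
  simp [h0]

/-- Interior regularity for `delta d`: test `delta d u` against `χ² u`; the commutator terms are
absorbed into half of `‖χ d u‖²` and the energy of the cutoff. -/
lemma IsCutoff.memL2_d (hχ : IsCutoff W χ C) {i : ℕ} (hi : i + 1 ≤ n)
    {u : (Fin (i + 1) → V) → ℂ} (huc : IsCochain G i u) (hu : MemL2 W i u)
    (hL : MemL2 W i (delta G W i (d G i u))) : MemL2 W (i + 1) (d G i u) := by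
  set g := d G i u with hg
  have hgc : IsCochain G (i + 1) g := isCochain_d huc
  set K : ℝ := ∑' x, W.m i x * ‖u x‖ ^ 2 with hK
  set K' : ℝ := ∑' x, W.m i x * ‖delta G W i g x‖ ^ 2 with hK'
  refine hχ.memL2_of_bound (B := 2 * ((i + 2) * (K + K') + 3 * (i + 2) * ((i + 2) * (C * K))))
    fun k => ?_
  set U : (Fin (i + 1) → V) → ℂ := fun x => ((cut (χ k) x ^ 2 : ℝ) : ℂ) * u x with hU
  have hUle : ∀ x, ‖U x‖ ≤ ‖u x‖ := fun x => by
    rw [hU, norm_mul, Complex.norm_real, Real.norm_of_nonneg (sq_nonneg _)]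
    exact mul_le_of_le_one_left (norm_nonneg _)
      (pow_le_one₀ (hχ.cut_nonneg k x) (hχ.cut_le_one k x))
  have hUfin : (Function.support U).Finite :=
    (hχ.finite_support_cut k i).subset fun x hx h0 => hx (by
      simp only at h0
      simp [hU, h0])
  have hU2le : ∀ x, W.m i x * ‖U x‖ ^ 2 ≤ W.m i x * ‖u x‖ ^ 2 := fun x =>
    mul_le_mul_of_nonneg_left (pow_le_pow_left₀ (norm_nonneg _) (hUle x) 2) (W.nonneg _ _)
  have hU2 : MemL2 W i U := MemL2.of_finite hUfin
  have hpt : ∀ τ, (1 / 2) * (W.m (i + 1) τ * ‖cutMul (χ k) g τ‖ ^ 2)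
      ≤ (((W.m (i + 1) τ : ℝ) : ℂ) * d G i U τ * (starRingEnd ℂ) (g τ)).re
        + 3 * (i + 2) * (W.m (i + 1) τ *
          (osc (χ k) τ * ∑ j : Fin (i + 2), ‖u (τ ∘ j.succAbove)‖ ^ 2)) := by
    intro τ
    by_cases hτ : IsSimplex G τ
    swap
    · rw [weight_eq_zero W hi hτ]; simp
    set q := osc (χ k) τ with hq
    set r := √q with hr
    have hq0 : 0 ≤ q := osc_nonneg _ _
    have hrq : r ^ 2 = q := Real.sq_sqrt hq0
    have hr0 : 0 ≤ r := Real.sqrt_nonneg _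
    have hc0 : 0 ≤ cut (χ k) τ := hχ.cut_nonneg k τ
    set S : ℝ := ∑ j : Fin (i + 2), ‖u (τ ∘ j.succAbove)‖ with hS
    have hS0 : 0 ≤ S := Finset.sum_nonneg fun _ _ => norm_nonneg _
    have hgS : ‖g τ‖ ≤ S := by
      have := norm_d_comm_le (θ := fun _ => 1) (θ' := fun _ => 0) u hτ
      simpa using this
    set e : ℂ := d G i U τ - ((cut (χ k) τ ^ 2 : ℝ) : ℂ) * g τ with he
    have heS : ‖e‖ ≤ (q + 2 * cut (χ k) τ * r) * S := by
      refine (norm_d_comm_le (θ := fun x => cut (χ k) x ^ 2) (θ' := fun x => cut (χ k) x ^ 2) u hτ).trans ?_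
      rw [hS, Finset.mul_sum]
      refine Finset.sum_le_sum fun j _ => mul_le_mul_of_nonneg_right ?_ (norm_nonneg _)
      have h1 : |cut (χ k) (τ ∘ j.succAbove) - cut (χ k) τ| ≤ r :=
        Real.abs_le_sqrt (cut_face_sub_sq_le (χ k) τ j)
      have h2 : 0 ≤ cut (χ k) (τ ∘ j.succAbove) - cut (χ k) τ := sub_nonneg.2 (cut_le_face (χ k) τ j)
      rw [abs_of_nonneg h2] at h1
      rw [abs_of_nonneg (by nlinarith)]
      nlinarith
    have hre : (d G i U τ * (starRingEnd ℂ) (g τ)).re ≥ cut (χ k) τ ^ 2 * ‖g τ‖ ^ 2 - ‖e‖ * ‖g τ‖ := by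
      have h1 : d G i U τ = ((cut (χ k) τ ^ 2 : ℝ) : ℂ) * g τ + e := by rw [he]; ring
      have h2 : ((cut (χ k) τ ^ 2 : ℝ) : ℂ) * g τ * (starRingEnd ℂ) (g τ)
          = ((cut (χ k) τ ^ 2 * ‖g τ‖ ^ 2 : ℝ) : ℂ) := by
        rw [mul_assoc, Complex.mul_conj, Complex.normSq_eq_norm_sq]
        push_cast; ring
      rw [h1, add_mul, h2, Complex.add_re, Complex.ofReal_re]
      have h3 := (abs_le.1 (Complex.abs_re_le_norm (e * (starRingEnd ℂ) (g τ)))).1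
      rw [norm_mul, RCLike.norm_conj] at h3
      linarith
    have hS2 := sq_sum_face_le u τ
    have hge : ‖e‖ * ‖g τ‖ ≤ (1 / 2) * (cut (χ k) τ ^ 2 * ‖g τ‖ ^ 2) + 3 * q * S ^ 2 := by
      have h1 : ‖e‖ * ‖g τ‖ ≤ (q + 2 * cut (χ k) τ * r) * S * ‖g τ‖ :=
        mul_le_mul_of_nonneg_right heS (norm_nonneg _)
      have h2 : q * S * ‖g τ‖ ≤ q * S * S :=
        mul_le_mul_of_nonneg_left hgS (mul_nonneg hq0 hS0)
      have h3 : 2 * (cut (χ k) τ * ‖g τ‖) * (r * S)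
          ≤ (1 / 2) * (cut (χ k) τ * ‖g τ‖) ^ 2 + 2 * (r * S) ^ 2 := by
        nlinarith [sq_nonneg (cut (χ k) τ * ‖g τ‖ - 2 * (r * S))]
      have h4 : (r * S) ^ 2 = q * S ^ 2 := by rw [mul_pow, hrq]
      rw [h4] at h3
      nlinarith
    have hcut : ‖cutMul (χ k) g τ‖ ^ 2 = cut (χ k) τ ^ 2 * ‖g τ‖ ^ 2 := by
      rw [cutMul, norm_mul, mul_pow, Complex.norm_real, Real.norm_eq_abs, sq_abs]
    have hfin : (1 / 2) * ‖cutMul (χ k) g τ‖ ^ 2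
        ≤ (d G i U τ * (starRingEnd ℂ) (g τ)).re
          + 3 * (i + 2) * (q * ∑ j : Fin (i + 2), ‖u (τ ∘ j.succAbove)‖ ^ 2) := by
      rw [hcut]
      have := mul_le_mul_of_nonneg_left hS2 hq0
      nlinarith
    rw [mul_assoc, Complex.re_ofReal_mul]
    have := mul_le_mul_of_nonneg_left hfin (W.nonneg (i + 1) τ)
    nlinarith
  have hs1 : Summable fun τ => W.m (i + 1) τ * ‖cutMul (χ k) g τ‖ ^ 2 :=
    MemL2.of_finite (hχ.finite_support_cutMul k g)
  have hs2 := summable_finite_weight (W := W) (g := g) (finite_support_d (G := G) hUfin)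
  have hs3 := hχ.hasSum_osc hi hu k
  have hsum := Summable.tsum_le_tsum hpt (hs1.mul_left _)
    ((Complex.hasSum_re hs2.hasSum).summable.add (hs3.summable.mul_left _))
  rw [tsum_mul_left, (Complex.hasSum_re hs2.hasSum).summable.tsum_add (hs3.summable.mul_left _),
    tsum_mul_left, hs3.tsum_eq, (Complex.hasSum_re hs2.hasSum).tsum_eq] at hsum
  have hgreen := green_left W hi hUfin hgc.1
  have hE := hχ.tsum_energy_le hi hu k
  have hip : (ip W (i + 1) (d G i U) g).re ≤ (i + 2) * (K + K') := by
    refine (Complex.re_le_norm _).trans ?_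
    rw [hgreen, norm_mul, Complex.norm_real, Real.norm_eq_abs, abs_greenConst]
    refine mul_le_mul_of_nonneg_left ?_ (by positivity)
    have h1 := norm_ip_le hU2 hL one_pos
    have h2 := Summable.tsum_le_tsum hU2le hU2 hu
    linarith
  rw [ip] at hip
  have h3 : 3 * ((i : ℝ) + 2) * ((i + 2) * ∑' x, ‖u x‖ ^ 2 * cutEnergy W (χ k) i x)
      ≤ 3 * (i + 2) * ((i + 2) * (C * K)) := by gcongr
  linarith

/-- Interior regularity for `d delta`: test `d delta v` against `χ² delta v` by Green's formula;
the commutator terms are absorbed into half of `‖χ delta v‖²`. -/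
lemma IsCutoff.memL2_delta (hχ : IsCutoff W χ C) {i : ℕ} (hi : i + 1 ≤ n)
    {v : (Fin (i + 2) → V) → ℂ} (hvc : IsCochain G (i + 1) v) (hv : MemL2 W (i + 1) v)
    (hL : MemL2 W (i + 1) (d G i (delta G W i v))) : MemL2 W i (delta G W i v) := by
  set g := delta G W i v with hg
  set w := d G i g with hw
  set K : ℝ := ∑' x, W.m (i + 1) x * ‖v x‖ ^ 2 with hK
  set K' : ℝ := ∑' x, W.m (i + 1) x * ‖w x‖ ^ 2 with hK'
  have hC := hχ.pos
  -- the weight of Young's inequality, chosen for the absorption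
  set ε : ℝ := (2 * C)⁻¹ with hε
  have hε0 : 0 < ε := by positivity
  set A : ℝ := K' + (1 + (i + 2) * ε⁻¹) * K with hA
  refine hχ.memL2_of_bound (B := 2 * A) fun k => ?_
  set N : ℝ := ∑' x, W.m i x * ‖cutMul (χ k) g x‖ ^ 2 with hN
  set U : (Fin (i + 1) → V) → ℂ := fun x => ((cut (χ k) x ^ 2 : ℝ) : ℂ) * g x with hU
  have hUfin : (Function.support U).Finite :=
    (hχ.finite_support_cut k i).subset fun x hx h0 => hx (by
      simp only at h0
      simp [hU, h0])
  have hcg : MemL2 W i (cutMul (χ k) g) := MemL2.of_finite (hχ.finite_support_cutMul k g)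
  have hcut : ∀ x, ‖cutMul (χ k) g x‖ = cut (χ k) x * ‖g x‖ := fun x => by
    rw [cutMul, norm_mul, Complex.norm_real, Real.norm_of_nonneg (hχ.cut_nonneg k x)]
  have hpt : ∀ τ, ‖((W.m (i + 1) τ : ℝ) : ℂ) * d G i U τ * (starRingEnd ℂ) (v τ)‖
      ≤ W.m (i + 1) τ * ‖w τ‖ ^ 2 + (1 + (i + 2) * ε⁻¹) * (W.m (i + 1) τ * ‖v τ‖ ^ 2)
        + ε * (W.m (i + 1) τ *
          (osc (χ k) τ * ∑ j : Fin (i + 2), ‖cutMul (χ k) g (τ ∘ j.succAbove)‖ ^ 2)) := by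
    intro τ
    rw [norm_ip_term]
    by_cases hτ : IsSimplex G τ
    swap
    · rw [weight_eq_zero W hi hτ]; simp
    set q := osc (χ k) τ with hq
    set r := √q with hr
    have hq0 : 0 ≤ q := osc_nonneg _ _
    have hrq : r ^ 2 = q := Real.sq_sqrt hq0
    have hr0 : 0 ≤ r := Real.sqrt_nonneg _
    have hc0 : 0 ≤ cut (χ k) τ := hχ.cut_nonneg k τ
    have hc1 : cut (χ k) τ ≤ 1 := hχ.cut_le_one k τ
    have h1 : ‖d G i U τ‖ ≤ ‖w τ‖
        + ∑ j : Fin (i + 2), 2 * r * ‖cutMul (χ k) g (τ ∘ j.succAbove)‖ := by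
      have h2 : ‖d G i U τ‖ ≤ ‖((cut (χ k) τ ^ 2 : ℝ) : ℂ) * w τ‖
          + ‖d G i U τ - ((cut (χ k) τ ^ 2 : ℝ) : ℂ) * w τ‖ := by
        have := norm_add_le (((cut (χ k) τ ^ 2 : ℝ) : ℂ) * w τ) (d G i U τ - ((cut (χ k) τ ^ 2 : ℝ) : ℂ) * w τ)
        simpa using this
      refine h2.trans (add_le_add ?_ ?_)
      · rw [norm_mul, Complex.norm_real, Real.norm_of_nonneg (sq_nonneg _)]
        exact mul_le_of_le_one_left (norm_nonneg _) (pow_le_one₀ hc0 hc1)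
      · refine (norm_d_comm_le (θ := fun x => cut (χ k) x ^ 2) (θ' := fun x => cut (χ k) x ^ 2) g hτ).trans ?_
        refine Finset.sum_le_sum fun j _ => ?_
        rw [hcut, ← mul_assoc]
        refine mul_le_mul_of_nonneg_right ?_ (norm_nonneg _)
        have h1 : |cut (χ k) (τ ∘ j.succAbove) - cut (χ k) τ| ≤ r :=
          Real.abs_le_sqrt (cut_face_sub_sq_le (χ k) τ j)
        have h2 : 0 ≤ cut (χ k) (τ ∘ j.succAbove) - cut (χ k) τ := sub_nonneg.2 (cut_le_face (χ k) τ j)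
        rw [abs_of_nonneg h2] at h1
        rw [abs_of_nonneg (by nlinarith)]
        nlinarith
    have hY : ∀ j : Fin (i + 2), 2 * r * ‖cutMul (χ k) g (τ ∘ j.succAbove)‖ * ‖v τ‖
        ≤ ε * (q * ‖cutMul (χ k) g (τ ∘ j.succAbove)‖ ^ 2) + ε⁻¹ * ‖v τ‖ ^ 2 := by
      intro j
      set t := ‖cutMul (χ k) g (τ ∘ j.succAbove)‖
      have h2 : 0 ≤ ε * (r * t - ε⁻¹ * ‖v τ‖) ^ 2 := by positivity
      have h3 : ε * (r * t - ε⁻¹ * ‖v τ‖) ^ 2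
          = ε * (r ^ 2 * t ^ 2) + ε⁻¹ * ‖v τ‖ ^ 2 - 2 * r * t * ‖v τ‖ := by
        field_simp
        ring
      rw [hrq] at h3
      linarith
    have h4 : ‖d G i U τ‖ * ‖v τ‖ ≤ ‖w τ‖ ^ 2 + (1 + (i + 2) * ε⁻¹) * ‖v τ‖ ^ 2
        + ε * (q * ∑ j : Fin (i + 2), ‖cutMul (χ k) g (τ ∘ j.succAbove)‖ ^ 2) := by
      have h5 := mul_le_mul_of_nonneg_right h1 (norm_nonneg (v τ))
      rw [add_mul, Finset.sum_mul] at h5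
      have h6 := Finset.sum_le_sum fun (j : Fin (i + 2)) (_ : j ∈ Finset.univ) => hY j
      rw [Finset.sum_add_distrib, ← Finset.mul_sum, ← Finset.mul_sum, Finset.sum_const,
        Finset.card_univ, Fintype.card_fin, nsmul_eq_mul] at h6
      push_cast at h6
      nlinarith [sq_nonneg (‖w τ‖ - ‖v τ‖), sq_nonneg ‖w τ‖, sq_nonneg ‖v τ‖]
    have := mul_le_mul_of_nonneg_left h4 (W.nonneg (i + 1) τ)
    nlinarith
  have hs3 := hχ.hasSum_osc hi hcg k
  have hnorm : ‖ip W (i + 1) (d G i U) v‖ ≤ _ :=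
    tsum_of_norm_bounded ((hL.hasSum.add (hv.hasSum.mul_left (1 + (i + 2) * ε⁻¹))).add
      (hs3.mul_left ε)) hpt
  have hipU : ip W i U g = ((N : ℝ) : ℂ) := by
    rw [ip, hN, Complex.ofReal_tsum]
    refine tsum_congr fun x => ?_
    rw [hcut, mul_assoc, hU, mul_assoc, Complex.mul_conj, Complex.normSq_eq_norm_sq]
    push_cast
    ring
  have hN0 : 0 ≤ N := tsum_nonneg fun x => mul_nonneg (W.nonneg _ _) (sq_nonneg _)
  rw [green_left W hi hUfin hvc.1, hipU, norm_mul, Complex.norm_real, Complex.norm_real,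
    Real.norm_eq_abs, Real.norm_of_nonneg hN0, abs_greenConst] at hnorm
  have hE := hχ.tsum_energy_le hi hcg k
  have h3 : ε * (((i : ℝ) + 2) * ∑' x, ‖cutMul (χ k) g x‖ ^ 2 * cutEnergy W (χ k) i x)
      ≤ ε * ((i + 2) * (C * N)) := by gcongr
  have h4 : ε * (((i : ℝ) + 2) * (C * N)) = (i + 2) * N / 2 := by
    rw [hε]; field_simp
  have h5 : ((i : ℝ) + 2) * N ≤ A + (i + 2) * N / 2 := by linarith
  have h6 : (0 : ℝ) ≤ i := Nat.cast_nonneg i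
  nlinarith [mul_nonneg h6 hN0]

/-- In each positive degree one of the two terms of the Laplacian is bounded by the parity of the
degree, so both terms are separately in `ℓ²` on the maximal domain. -/
lemma IsCutoff.regularity (hχ : IsCutoff W χ C) {i : ℕ} (hi : i + 1 ≤ n)
    {u : (Fin (i + 2) → V) → ℂ} (huc : IsCochain G (i + 1) u) (hu : MemL2 W (i + 1) u)
    (hL : MemL2 W (i + 1) (Lblock G W (i + 1) u)) :
    (MemL2 W i (delta G W i u) ∧ MemL2 W (i + 1) (d G i (delta G W i u))) ∧
    (i + 2 ≤ n → MemL2 W (i + 2) (d G (i + 1) u) ∧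
      MemL2 W (i + 1) (delta G W (i + 1) (d G (i + 1) u))) := by
  by_cases h2 : i + 2 ≤ n
  · simp only [Lblock, h2, if_true] at hL
    rcases Nat.even_or_odd i with he | ho
    · have h1 := hχ.memL2_d_of_odd h2 he.add_one hu
      have h3 := hχ.memL2_delta_of_odd h2 he.add_one h1
      have h4 : MemL2 W (i + 1) (d G i (delta G W i u)) := by
        have := hL.add h3.neg
        simpa using this
      exact ⟨⟨hχ.memL2_delta hi huc hu h4, h4⟩, fun _ => ⟨h1, h3⟩⟩
    · have h1 := hχ.memL2_delta_of_odd hi ho hu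
      have h3 := hχ.memL2_d_of_odd hi ho h1
      have h4 : MemL2 W (i + 1) (delta G W (i + 1) (d G (i + 1) u)) := by
        have := hL.add h3.neg
        simpa using this
      exact ⟨⟨h1, h3⟩, fun _ => ⟨hχ.memL2_d h2 huc hu h4, h4⟩⟩
  · simp only [Lblock, h2, if_false, zero_add] at hL
    exact ⟨⟨hχ.memL2_delta hi huc hu hL, hL⟩, fun h => absurd h h2⟩

end Regularity

/-! ### Essential self-adjointness -/

section Assembly

variable {G : WG V} {n : ℕ} {W : CliqueWeights G n} {χ : ℕ → V → ℝ} {C : ℝ}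

lemma ip_add_left {i : ℕ} {f g h : (Fin (i + 1) → V) → ℂ}
    (h1 : Summable fun x => ((W.m i x : ℝ) : ℂ) * f x * (starRingEnd ℂ) (h x))
    (h2 : Summable fun x => ((W.m i x : ℝ) : ℂ) * g x * (starRingEnd ℂ) (h x)) :
    ip W i (f + g) h = ip W i f h + ip W i g h := by
  rw [ip, ip, ip, ← h1.tsum_add h2]
  refine tsum_congr fun x => ?_
  simp only [Pi.add_apply]
  ring

lemma ip_add_right {i : ℕ} {f g h : (Fin (i + 1) → V) → ℂ}
    (h1 : Summable fun x => ((W.m i x : ℝ) : ℂ) * h x * (starRingEnd ℂ) (f x))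
    (h2 : Summable fun x => ((W.m i x : ℝ) : ℂ) * h x * (starRingEnd ℂ) (g x)) :
    ip W i h (f + g) = ip W i h f + ip W i h g := by
  rw [ip, ip, ip, ← h1.tsum_add h2]
  refine tsum_congr fun x => ?_
  simp only [Pi.add_apply, map_add]
  ring

/-- Symmetry of `delta d` from the two Green formulas. -/
lemma ip_delta_d_comm {i : ℕ} {p q : (Fin (i + 1) → V) → ℂ}
    (h1 : ip W (i + 1) (d G i p) (d G i q) = greenConst i * ip W i p (delta G W i (d G i q)))
    (h2 : ip W (i + 1) (d G i q) (d G i p) = greenConst i * ip W i q (delta G W i (d G i p))) :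
    ip W i (delta G W i (d G i p)) q = ip W i p (delta G W i (d G i q)) := by
  have h3 := congrArg (starRingEnd ℂ) h2
  rw [map_mul, ip_conj, ip_conj, Complex.conj_ofReal, h1] at h3
  exact (mul_left_cancel₀ (greenConst_ne_zero i) h3).symm

/-- Symmetry of `d delta` from the two Green formulas. -/
lemma ip_d_delta_comm {i : ℕ} {p q : (Fin (i + 2) → V) → ℂ}
    (h1 : ip W (i + 1) (d G i (delta G W i p)) q
      = greenConst i * ip W i (delta G W i p) (delta G W i q))
    (h2 : ip W (i + 1) (d G i (delta G W i q)) p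
      = greenConst i * ip W i (delta G W i q) (delta G W i p)) :
    ip W (i + 1) (d G i (delta G W i p)) q = ip W (i + 1) p (d G i (delta G W i q)) := by
  have h3 := congrArg (starRingEnd ℂ) h2
  rw [map_mul, ip_conj, ip_conj, Complex.conj_ofReal] at h3
  rw [h1, h3]

lemma Lblock_zero (h1 : 1 ≤ n) (g : (Fin 1 → V) → ℂ) :
    Lblock G W 0 g = delta G W 0 (d G 0 g) := by
  simp [Lblock, h1]

lemma Lblock_succ_of_le {i : ℕ} (h : i + 2 ≤ n) (g : (Fin (i + 2) → V) → ℂ) :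
    Lblock G W (i + 1) g = delta G W (i + 1) (d G (i + 1) g) + d G i (delta G W i g) := by
  funext x
  simp [Lblock, h]

lemma Lblock_succ_of_not_le {i : ℕ} (h : ¬ i + 2 ≤ n) (g : (Fin (i + 2) → V) → ℂ) :
    Lblock G W (i + 1) g = d G i (delta G W i g) := by
  funext x
  simp [Lblock, h]

lemma ip_Lblock_of_finite (h1 : 1 ≤ n) {i : ℕ} (hi : i ≤ n) {p q : (Fin (i + 1) → V) → ℂ}
    (hp : IsCochain G i p) (hpf : (Function.support p).Finite) (hq : IsCochain G i q) :
    ip W i (Lblock G W i p) q = ip W i p (Lblock G W i q) := by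
  have hA : i + 1 ≤ n →
      ip W i (delta G W i (d G i p)) q = ip W i p (delta G W i (d G i q)) := fun h =>
    ip_delta_d_comm (green_left W h hpf (isCochain_d hq).1)
      (green_right W h q (isCochain_d hp).1 (finite_support_d hpf))
  cases i with
  | zero => rw [Lblock_zero h1, Lblock_zero h1]; exact hA h1
  | succ i =>
    have hB := ip_d_delta_comm (W := W) (p := p) (q := q)
      (green_left W hi (finite_support_delta W i hpf) hq.1)
      (green_right W hi (delta G W i q) hp.1 hpf)
    by_cases h2 : i + 2 ≤ n
    · rw [Lblock_succ_of_le h2, Lblock_succ_of_le h2,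
        ip_add_left (summable_finite_weight (finite_support_delta W _ (finite_support_d hpf)))
          (summable_finite_weight (finite_support_d (finite_support_delta W _ hpf))),
        ip_add_right (summable_finite_weight hpf) (summable_finite_weight hpf), hA h2, hB]
    · rw [Lblock_succ_of_not_le h2, Lblock_succ_of_not_le h2, hB]

/-- The Laplacian is symmetric on its maximal domain. -/
lemma IsCutoff.ip_Lblock (hχ : IsCutoff W χ C) (h1 : 1 ≤ n) {i : ℕ} (hi : i ≤ n)
    {p q : (Fin (i + 1) → V) → ℂ} (hp : IsCochain G i p) (hq : IsCochain G i q)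
    (hp2 : MemL2 W i p) (hq2 : MemL2 W i q) (hLp : MemL2 W i (Lblock G W i p))
    (hLq : MemL2 W i (Lblock G W i q)) :
    ip W i (Lblock G W i p) q = ip W i p (Lblock G W i q) := by
  cases i with
  | zero =>
    rw [Lblock_zero h1] at hLp hLq ⊢
    rw [Lblock_zero h1]
    have hdp := hχ.memL2_d h1 hp hp2 hLp
    have hdq := hχ.memL2_d h1 hq hq2 hLq
    exact ip_delta_d_comm (hχ.green h1 (isCochain_d hq).1 hp2 hdp hdq hLq)
      (hχ.green h1 (isCochain_d hp).1 hq2 hdq hdp hLp)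
  | succ i =>
    obtain ⟨⟨hδp, hdδp⟩, hp3⟩ := hχ.regularity hi hp hp2 hLp
    obtain ⟨⟨hδq, hdδq⟩, hq3⟩ := hχ.regularity hi hq hq2 hLq
    have hB := ip_d_delta_comm (W := W) (p := p) (q := q)
      (hχ.green hi hq.1 hδp hdδp hq2 hδq) (hχ.green hi hp.1 hδq hdδq hp2 hδp)
    by_cases h2 : i + 2 ≤ n
    · obtain ⟨hdp, hδdp⟩ := hp3 h2
      obtain ⟨hdq, hδdq⟩ := hq3 h2
      have hA := ip_delta_d_comm (hχ.green h2 (isCochain_d hq).1 hp2 hdp hdq hδdq)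
        (hχ.green h2 (isCochain_d hp).1 hq2 hdq hdp hδdp)
      have hm := W.nonneg (i + 1)
      rw [Lblock_succ_of_le h2, Lblock_succ_of_le h2,
        ip_add_left (summable_mul_conj hm hδdp hq2) (summable_mul_conj hm hdδp hq2),
        ip_add_right (summable_mul_conj hm hp2 hδdq) (summable_mul_conj hm hp2 hdδq), hA, hB]
    · rw [Lblock_succ_of_not_le h2, Lblock_succ_of_not_le h2, hB]

lemma IsCochain.add {i : ℕ} {f g : (Fin (i + 1) → V) → ℂ} (hf : IsCochain G i f)
    (hg : IsCochain G i g) : IsCochain G i (f + g) :=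
  ⟨fun x σ => by simp only [Pi.add_apply, hf.1 x σ, hg.1 x σ]; ring,
    fun x hx => by simp [hf.2 x hx, hg.2 x hx]⟩

lemma IsCochain.smul {i : ℕ} (c : ℂ) {f : (Fin (i + 1) → V) → ℂ} (hf : IsCochain G i f) :
    IsCochain G i (c • f) :=
  ⟨fun x σ => by simp only [Pi.smul_apply, smul_eq_mul, hf.1 x σ]; ring,
    fun x hx => by simp [hf.2 x hx]⟩

lemma isCochain_zero (i : ℕ) : IsCochain G i 0 :=
  ⟨fun x σ => by simp, fun x _ => rfl⟩

variable (G) in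
/-- The space of `i`-cochains. -/
def cochains (i : ℕ) : Submodule ℂ ((Fin (i + 1) → V) → ℂ) where
  carrier := {f | IsCochain G i f}
  add_mem' := fun hf hg => hf.add hg
  zero_mem' := isCochain_zero i
  smul_mem' := fun c _ hf => hf.smul c

variable (G) in
/-- The space `C_c^i(V)` of finitely supported `i`-cochains. -/
def finCochains (i : ℕ) : Submodule ℂ ((Fin (i + 1) → V) → ℂ) where
  carrier := {f | IsCochain G i f ∧ (Function.support f).Finite}
  add_mem' := fun hf hg => ⟨hf.1.add hg.1,
    (hf.2.union hg.2).subset (Function.support_add _ _)⟩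
  zero_mem' := ⟨isCochain_zero i, by simp⟩
  smul_mem' := fun c _ hf => ⟨hf.1.smul c,
    hf.2.subset (Function.support_const_smul_subset c _)⟩

lemma isClosed_cochains (i : ℕ) : IsClosed (cochains G i : Set ((Fin (i + 1) → V) → ℂ)) := by
  have : (cochains G i : Set ((Fin (i + 1) → V) → ℂ))
      = (⋂ x, ⋂ σ : Equiv.Perm (Fin (i + 1)),
          {f | f (x ∘ σ) = ((Equiv.Perm.sign σ : ℤ) : ℂ) * f x}) ∩
        ⋂ x, ⋂ _ : ¬ IsSimplex G x, {f | f x = 0} := by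
    ext f
    simp only [cochains, IsCochain, IsAlternating, Submodule.coe_set_mk, AddSubmonoid.coe_set_mk,
      AddSubsemigroup.coe_set_mk, Set.mem_ofPred_eq, Set.mem_inter_iff, Set.mem_iInter]
  rw [this]
  refine IsClosed.inter ?_ ?_
  · refine isClosed_iInter fun x => isClosed_iInter fun σ => isClosed_eq ?_ ?_ <;> fun_prop
  · refine isClosed_iInter fun x => isClosed_iInter fun _ => isClosed_eq ?_ ?_ <;> fun_prop

/-- Multiplication by a permutation-invariant function preserves cochains. -/
lemma IsCochain.mul_invariant {i : ℕ} {f : (Fin (i + 1) → V) → ℂ} (hf : IsCochain G i f)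
    {a : (Fin (i + 1) → V) → ℂ} (ha : ∀ x (σ : Equiv.Perm (Fin (i + 1))), a (x ∘ σ) = a x) :
    IsCochain G i fun x => a x * f x :=
  ⟨fun x σ => by simp only [hf.1 x σ, ha x σ]; ring, fun x hx => by simp [hf.2 x hx]⟩

lemma isCochain_Lblock (W : CliqueWeights G n) (h1 : 1 ≤ n) {i : ℕ} (hi : i ≤ n)
    {f : (Fin (i + 1) → V) → ℂ} (hf : IsCochain G i f) : IsCochain G i (Lblock G W i f) := by
  cases i with
  | zero => rw [Lblock_zero h1]; exact isCochain_delta W h1 (isCochain_d hf)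
  | succ i =>
    by_cases h2 : i + 2 ≤ n
    · rw [Lblock_succ_of_le h2]
      exact (isCochain_delta W h2 (isCochain_d hf)).add (isCochain_d (isCochain_delta W hi hf))
    · rw [Lblock_succ_of_not_le h2]
      exact isCochain_d (isCochain_delta W hi hf)

lemma finite_support_Lblock (W : CliqueWeights G n) (h1 : 1 ≤ n) {i : ℕ}
    {f : (Fin (i + 1) → V) → ℂ} (hf : (Function.support f).Finite) :
    (Function.support (Lblock G W i f)).Finite := by
  cases i with
  | zero => rw [Lblock_zero h1]; exact finite_support_delta W _ (finite_support_d hf)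
  | succ i =>
    by_cases h2 : i + 2 ≤ n
    · rw [Lblock_succ_of_le h2]
      exact ((finite_support_delta W _ (finite_support_d hf)).union
        (finite_support_d (finite_support_delta W _ hf))).subset (Function.support_add _ _)
    · rw [Lblock_succ_of_not_le h2]
      exact finite_support_d (finite_support_delta W _ hf)

lemma Lblock_add (W : CliqueWeights G n) (h1 : 1 ≤ n) {i : ℕ} (hi : i ≤ n)
    (f g : (Fin (i + 1) → V) → ℂ) :
    Lblock G W i (f + g) = Lblock G W i f + Lblock G W i g := by
  cases i with
  | zero => rw [Lblock_zero h1, Lblock_zero h1, Lblock_zero h1, d_add, delta_add W h1]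
  | succ i =>
    by_cases h2 : i + 2 ≤ n
    · rw [Lblock_succ_of_le h2, Lblock_succ_of_le h2, Lblock_succ_of_le h2, d_add,
        delta_add W h2, delta_add W hi, d_add]
      abel
    · rw [Lblock_succ_of_not_le h2, Lblock_succ_of_not_le h2, Lblock_succ_of_not_le h2,
        delta_add W hi, d_add]

lemma Lblock_smul (W : CliqueWeights G n) (h1 : 1 ≤ n) {i : ℕ} (c : ℂ)
    (f : (Fin (i + 1) → V) → ℂ) : Lblock G W i (c • f) = c • Lblock G W i f := by
  cases i with
  | zero => rw [Lblock_zero h1, Lblock_zero h1, d_smul, delta_smul]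
  | succ i =>
    by_cases h2 : i + 2 ≤ n
    · rw [Lblock_succ_of_le h2, Lblock_succ_of_le h2, d_smul, delta_smul, delta_smul, d_smul,
        smul_add]
    · rw [Lblock_succ_of_not_le h2, Lblock_succ_of_not_le h2, delta_smul, d_smul]

/-- In each degree, finitely supported cochains are a core for the maximal Laplacian: a pair
`(a, b)` orthogonal to the graph over `C_c^i(V)` satisfies `L b = -a`, hence is orthogonal to the
whole maximal graph by symmetry. -/
lemma IsCutoff.exists_approx_Lblock (hχ : IsCutoff W χ C) (h1 : 1 ≤ n) {i : ℕ} (hi : i ≤ n)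
    {u : (Fin (i + 1) → V) → ℂ} (hu : IsCochain G i u) (hu2 : MemL2 W i u)
    (hLu : MemL2 W i (Lblock G W i u)) :
    ∃ φ : ℕ → (Fin (i + 1) → V) → ℂ,
      (∀ k, IsCochain G i (φ k) ∧ (Function.support (φ k)).Finite) ∧
      TendstoL2 W i φ u ∧ TendstoL2 W i (fun k => Lblock G W i (φ k)) (Lblock G W i u) := by
  obtain ⟨φ, hφ, ht1, ht2⟩ := exists_graph_approx (W.m i) (W.nonneg i) (cochains G i)
    (finCochains G i) (fun f hf => hf.1) (isClosed_cochains i)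
    (fun f hf => IsCochain.mul_invariant hf fun x σ => by rw [weight_perm W hi])
    (fun f hf => IsCochain.mul_invariant hf fun x σ => by rw [weight_perm W hi])
    (fun f hf x hx => hf.2 x fun hs => by
      have := (weight_pos_iff W hi x).2 hs
      linarith)
    (Lblock G W i) (fun f _ g _ => Lblock_add W h1 hi f g) (fun c f _ => Lblock_smul W h1 c f)
    (fun f hf => isCochain_Lblock W h1 hi hf.1) (fun f hf => MemL2.of_finite hf.2)
    (fun f hf => MemL2.of_finite (W := W) (finite_support_Lblock W h1 hf.2))
    (u := u) hu (isCochain_Lblock W h1 hi hu) hu2 hLu (by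
      intro a ha b hb ha2 hb2 horth
      have hLb : IsCochain G i (Lblock G W i b) := isCochain_Lblock W h1 hi hb
      have hab : a + Lblock G W i b = 0 := by
        refine eq_zero_of_test W hi (IsCochain.add ha hLb) fun φ hφ hφf => ?_
        have h := horth φ ⟨hφ, hφf⟩
        change ip W i φ a + ip W i (Lblock G W i φ) b = 0 at h
        rw [ip_Lblock_of_finite h1 hi hφ hφf hb,
          ← ip_add_right (summable_finite_weight hφf) (summable_finite_weight hφf)] at h
        rw [← ip_conj, h, map_zero]
      have hLb' : Lblock G W i b = -a := eq_neg_of_add_eq_zero_right hab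
      have hLb2 : MemL2 W i (Lblock G W i b) := by
        rw [hLb', MemL2]
        simpa using ha2
      change ip W i u a + ip W i (Lblock G W i u) b = 0
      have hm := W.nonneg i
      rw [hχ.ip_Lblock h1 hi hu hb hu2 hb2 hLu hLb2,
        ← ip_add_right (summable_mul_conj hm hu2 ha2) (summable_mul_conj hm hu2 hLb2), hab]
      simp [ip])
  refine ⟨φ, hφ, ?_, ?_⟩
  · simpa [TendstoL2, norm2] using ht1.const_mul ((Nat.factorial (i + 1) : ℝ))⁻¹
  · simpa [TendstoL2, norm2] using ht2.const_mul ((Nat.factorial (i + 1) : ℝ))⁻¹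

lemma tendstoL2_const (i : ℕ) (f : (Fin (i + 1) → V) → ℂ) : TendstoL2 W i (fun _ => f) f := by
  simp [TendstoL2, norm2]

lemma Dop_of_lt (W : CliqueWeights G n) (f : ∀ i : ℕ, (Fin (i + 1) → V) → ℂ) {i : ℕ}
    (hi : n < i) : Dop G W f i = 0 := by
  cases i with
  | zero => omega
  | succ i => simp [Dop, not_le.2 hi]

lemma IsCutoff.esa_L (hχ : IsCutoff W χ C) (h1 : 1 ≤ n) : ESA_L W := by
  intro u hu hu2 hLu
  have key : ∀ i, ∃ φ : ℕ → (Fin (i + 1) → V) → ℂ,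
      (∀ k, IsCochain G i (φ k) ∧ (Function.support (φ k)).Finite) ∧
      (n < i → ∀ k, φ k = 0) ∧ TendstoL2 W i φ (u i) ∧
      (i ≤ n → TendstoL2 W i (fun k => Lblock G W i (φ k)) (Lblock G W i (u i))) := by
    intro i
    by_cases hi : i ≤ n
    · have hL := hLu i
      rw [Dop_Dop_eq W hu hi] at hL
      obtain ⟨φ, hφ, ht1, ht2⟩ := hχ.exists_approx_Lblock h1 hi (hu.1 i) (hu2 i) hL
      exact ⟨φ, hφ, fun h => absurd hi (not_le.2 h), ht1, fun _ => ht2⟩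
    · refine ⟨fun _ => 0, fun _ => ⟨isCochain_zero i, by simp⟩, fun _ _ => rfl, ?_,
        fun h => absurd h hi⟩
      rw [hu.2 i (not_le.1 hi)]
      exact tendstoL2_const i 0
  choose φ hφ hφ0 ht1 ht2 using key
  have hfam : ∀ k, CochainFamily G n fun i => φ i k := fun k =>
    ⟨fun i => (hφ i k).1, fun i hi => hφ0 i hi k⟩
  refine ⟨fun k i => φ i k, fun k => ⟨hfam k, fun i => (hφ i k).2⟩, ht1, fun i => ?_⟩
  by_cases hi : i ≤ n
  · have h2 := ht2 i hi
    rw [Dop_Dop_eq W hu hi]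
    simpa only [Dop_Dop_eq W (hfam _) hi] using h2
  · simp only [Dop_of_lt W _ (not_le.1 hi)]
    exact tendstoL2_const i 0

lemma cutMul_zero (χ : V → ℝ) (i : ℕ) : cutMul χ (0 : (Fin (i + 1) → V) → ℂ) = 0 := by
  funext x
  simp [cutMul]

lemma NullL2.tendstoL2 {i : ℕ} {F : ℕ → (Fin (i + 1) → V) → ℂ} {f : (Fin (i + 1) → V) → ℂ}
    (h : NullL2 W i fun k x => F k x - f x) : TendstoL2 W i F f := by
  simpa [TendstoL2, norm2] using h.2.const_mul ((Nat.factorial (i + 1) : ℝ))⁻¹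

lemma IsCutoff.esa_D (hχ : IsCutoff W χ C) (h1 : 1 ≤ n) : ESA_D W := by
  intro u hu hu2 hDu
  refine ⟨fun k i => cutMul (χ k) (u i), fun k => ⟨⟨fun i => isCochain_cutMul _ (hu.1 i),
    fun i hi => ?_⟩, fun i => hχ.finite_support_cutMul k _⟩,
    fun i => (hχ.null_cutMul_sub (hu2 i)).tendstoL2, fun i => ?_⟩
  · simp only [hu.2 i hi, cutMul_zero]
  · cases i with
    | zero =>
      have h2 := (hχ.null_delta_comm h1 (hu2 1)).add (hχ.null_cutMul_sub (hDu 0))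
      refine NullL2.tendstoL2 ?_
      simpa [Dop] using h2
    | succ i =>
      by_cases hi : i + 1 ≤ n
      swap
      · simp only [Dop_of_lt W _ (not_le.1 hi)]
        exact tendstoL2_const _ 0
      have hδ : NullL2 W (i + 1) fun k x => delta G W (i + 1) (cutMul (χ k) (u (i + 2))) x
          - cutMul (χ k) (delta G W (i + 1) (u (i + 2))) x := by
        by_cases h2 : i + 2 ≤ n
        · exact hχ.null_delta_comm h2 (hu2 (i + 2))
        · simp only [hu.2 (i + 2) (not_le.1 h2), cutMul_zero, delta_zero, Pi.zero_apply, sub_zero]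
          exact NullL2.zero W (i + 1)
      have h3 := ((hχ.null_d_comm hi (hu2 i)).add hδ).add (hχ.null_cutMul_sub (hDu (i + 1)))
      refine NullL2.tendstoL2 ?_
      convert h3 using 3 with k x
      simp only [Dop, hi, if_true, cutMul]
      ring

end Assembly

/-- Weighted regularization: let `S_n^comb` be the combinatorial clique
`n`-simplicial complex over a locally finite graph `(V, E)`.  If there exists a family of
weights `(m_i)` (strictly positive exactly on simplices and permutation invariant, i.e. a
`CliqueWeights` structure whose underlying adjacency is that of `(V, E)`) making the
weighted complex globally `χ`-complete, then the Gauss–Bonnet operator `D = d + δ` and the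
Hodge Laplacian `L = D²` are essentially self-adjoint on `⊕_{i=0}^n C_c^i(V)` with respect
to the Hilbert structure `H = ⊕_{i=0}^n ℓ²(m_i)` determined by these weights. -/
theorem esa_of_weighted_regularization
    {V : Type*} [Countable V] (Gs : SimpleGraph V)
    (hlf : ∀ x, (Gs.neighborSet x).Finite) {n : ℕ} (hn : 2 ≤ n)
    (G : WG V) (W : CliqueWeights G n)
    (hadj : ∀ x y, G.Adj x y ↔ Gs.Adj x y)
    (hχ : GloballyChiComplete W) :
    ESA_D W ∧ ESA_L W := by
  obtain ⟨χ, C, h⟩ := exists_isCutoff W hχ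
  have h1 : 1 ≤ n := by omega
  exact ⟨h.esa_D h1, h.esa_L h1⟩

end DiscreteHodge
end

section
/- Hierarchy (global implies regional): if the weighted oriented clique n-simplicial complex S_n is globally χ-complete, then for every subset Λ ⊆ V, the restricted complex S_n|_Λ, obtained by keeping only the simplices with all vertices in Λ, is globally χ-complete (with exhaustion (O_k ∩ Λ) and the restricted cut-off functions). -/
/-!
The sets `O k ∩ Λ` clearly exhaust `Λ`, and on tuples with all vertices in `Λ` the averages of
`Λ.indicator χ` and of `χ` agree (`avg_indicator`); this gives the plateau condition. For the
energy bound, the coboundary over `Λ` of the restricted cut-off equals the global coboundary of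
`χ` on simplices inside `Λ` and vanishes elsewhere (`norm_dOn_indicator_le`), so each term of the
energy sum over `Λ` is at most the corresponding global term. Local finiteness makes the global
sum finite (`summable_energy`), hence the sums compare as well, and the global constant serves
for `Λ` (`gradEnergyOn_indicator_le`).
-/

open Filter Function Set
open scoped Topology

namespace DiscreteHodge

variable {V : Type*}

lemma avg_indicator (χ : V → ℝ) (Λ : Set V) {k : ℕ} (x : Fin k → V) (hx : ∀ j, x j ∈ Λ) :
    avg (Λ.indicator χ) x = avg χ x := by
  simp [avg, hx]

lemma norm_dOn_indicator_le (G : WG V) (χ : V → ℝ) (Λ : Set V) (j : ℕ) (z : Fin (j + 2) → V) :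
    ‖dOn G Λ j (fun σ : Fin (j + 1) → V => avg (Λ.indicator χ) σ) z‖ ≤
      ‖dOn G Set.univ j (fun σ : Fin (j + 1) → V => avg χ σ) z‖ := by
  unfold dOn
  by_cases hz : IsSimplex G z ∧ ∀ a, z a ∈ Λ
  · rw [Set.indicator_of_mem (show z ∈ {x | IsSimplex G x ∧ ∀ a, x a ∈ Λ} from hz),
      Set.indicator_of_mem
        (show z ∈ {x | IsSimplex G x ∧ ∀ a, x a ∈ Set.univ} from ⟨hz.1, fun _ => trivial⟩)]
    refine le_of_eq (congrArg _ (Finset.sum_congr rfl fun a _ => ?_))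
    exact congrArg _ (avg_indicator χ Λ (z ∘ a.succAbove) fun b => hz.2 _)
  · rw [Set.indicator_of_notMem (show z ∉ {x | IsSimplex G x ∧ ∀ a, x a ∈ Λ} from hz)]
    simp

/-- The energy sum has finitely many nonzero terms: `dOn` vanishes off simplices, so only
neighbors of the first vertex of `x` contribute. -/
lemma summable_energy {G : WG V} {n : ℕ} (W : CliqueWeights G n) (χ : V → ℝ) (j : ℕ)
    (x : Fin (j + 1) → V) :
    Summable fun y : V => W.m (j + 1) (Fin.snoc x y) *
      ‖dOn G Set.univ j (fun σ : Fin (j + 1) → V => avg χ σ) (Fin.snoc x y)‖ ^ 2 := by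
  refine summable_of_hasFiniteSupport ((G.locFin (x 0)).subset fun y hy => ?_)
  have hs : IsSimplex G (Fin.snoc x y : Fin (j + 2) → V) := by
    by_contra hns
    apply hy
    have h0 : dOn G Set.univ j (fun σ : Fin (j + 1) → V => avg χ σ) (Fin.snoc x y) = 0 :=
      Set.indicator_of_notMem (fun hm => hns hm.1) _
    simp [h0]
  have hadj := hs.2 (Fin.castSucc 0) (Fin.last (j + 1)) (Fin.castSucc_lt_last 0).ne
  rw [Fin.snoc_castSucc (α := fun _ => V), Fin.snoc_last (α := fun _ => V)] at hadj
  exact hadj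

lemma gradEnergyOn_indicator_le {G : WG V} {n : ℕ} (W : CliqueWeights G n) (χ : V → ℝ)
    (Λ : Set V) (j : ℕ) (x : Fin (j + 1) → V) :
    gradEnergyOn W Λ j (Λ.indicator χ) x ≤ gradEnergyOn W Set.univ j χ x := by
  unfold gradEnergyOn
  rw [Set.indicator_univ]
  refine mul_le_mul_of_nonneg_left ?_ (inv_nonneg.2 (W.nonneg j x))
  have hle : ∀ y : V, Set.indicator Λ
      (fun y => W.m (j + 1) (Fin.snoc x y) *
        ‖dOn G Λ j (fun σ : Fin (j + 1) → V => avg (Λ.indicator χ) σ) (Fin.snoc x y)‖ ^ 2) y ≤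
      W.m (j + 1) (Fin.snoc x y) *
        ‖dOn G Set.univ j (fun σ : Fin (j + 1) → V => avg χ σ) (Fin.snoc x y)‖ ^ 2 := by
    intro y
    refine Set.indicator_apply_le' (fun _ => ?_) fun _ =>
      mul_nonneg (W.nonneg _ _) (sq_nonneg _)
    exact mul_le_mul_of_nonneg_left
      (pow_le_pow_left₀ (norm_nonneg _) (norm_dOn_indicator_le G χ Λ j _) 2) (W.nonneg _ _)
  have hnn : ∀ y : V, 0 ≤ Set.indicator Λ
      (fun y => W.m (j + 1) (Fin.snoc x y) *
        ‖dOn G Λ j (fun σ : Fin (j + 1) → V => avg (Λ.indicator χ) σ) (Fin.snoc x y)‖ ^ 2) y :=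
    fun y => Set.indicator_nonneg (fun _ _ => mul_nonneg (W.nonneg _ _) (sq_nonneg _)) y
  have hS := summable_energy W χ j x
  exact (Summable.of_nonneg_of_le hnn hle hS).tsum_le_tsum hle hS

/-- Hierarchy (global implies regional): if the weighted oriented clique
`n`-simplicial complex is globally `χ`-complete, then for every subset `Λ ⊆ V` the
restricted complex `S_n|_Λ` (keeping only simplices with all vertices in `Λ`) is globally
`χ`-complete, with exhaustion `(O_k ∩ Λ)` and the restricted cut-off functions. -/
theorem globallyChiCompleteOn_of_globallyChiComplete
    {V : Type*} [Countable V] (G : WG V) {n : ℕ} (hn : 2 ≤ n) (W : CliqueWeights G n)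
    (O : ℕ → Set V) (χ : ℕ → V → ℝ)
    (h : IsChiWitnessOn W Set.univ O χ) (Λ : Set V) :
    IsChiWitnessOn W Λ (fun k => O k ∩ Λ) (fun k => Λ.indicator (χ k)) := by
  obtain ⟨hfin, hmono, -, hcov, hsupp, hone, C, hC, hE⟩ := h
  refine ⟨fun k => (hfin k).inter_of_left Λ, fun a b hab => Set.inter_subset_inter_left Λ (hmono hab),
    fun k => Set.inter_subset_right, ?_, fun k => ?_, ?_, C, hC, ?_⟩
  · rw [← Set.iUnion_inter, hcov, Set.univ_inter]
  · exact (hsupp k).subset (by rw [Set.support_indicator]; exact Set.inter_subset_right)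
  · intro k i hi x hx hΛ hO
    rw [avg_indicator (χ k) Λ x hΛ]
    exact hone k i hi x hx (fun _ => trivial) fun j => (hO j).1
  · intro k j hj x hx _
    exact (gradEnergyOn_indicator_le W (χ k) Λ j x).trans (hE k j hj x hx fun _ => trivial)

end DiscreteHodge
end
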